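/- arXiv:2509.13005 — 2 statements merged into one kernel-verified Lean document; each statement's English description precedes it below -/
import Mathlib

section
/- Let d ≥ 1, ν = (ν₁,…,ν_d) ∈ ℕ^d, and 1 ≤ r < ∞. Then the linear span of 𝒢_ν is dense in L^r(ℝ^d; ℂ). -/
open MeasureTheory Filter Complex
open scoped ENNReal

/-- The set of Gaussian wave packets on `ℝ^d`:
`g(x) = a · exp(−(1/2)(x−q)·Q(x−q)) · exp(i p·(x−q))` with `Q = A + iB`,
`A` real symmetric positive definite, `B` real symmetric. -/
def GaussianPacket (d : ℕ) : Set ((Fin d → ℝ) → ℂ) :=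
  {g | ∃ (a : ℂ) (p q : Fin d → ℝ) (A B : Matrix (Fin d) (Fin d) ℝ),
    A.PosDef ∧ B.IsSymm ∧
    ∀ x : Fin d → ℝ, g x =
      a * Complex.exp (-(1/2 : ℂ) *
          ∑ i, ∑ j, ((A i j : ℂ) + Complex.I * (B i j : ℂ)) *
            ((x i : ℂ) - (q i : ℂ)) * ((x j : ℂ) - (q j : ℂ))) *
        Complex.exp (Complex.I * ∑ i, (p i : ℂ) * ((x i : ℂ) - (q i : ℂ)))}

/-- The set `𝒢_ν` of polynomial Gaussian wave packets: products `P · g` with `g` a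
Gaussian wave packet and `P` a complex polynomial of degree at most `ν j` in each
variable `x j`. -/
def GaussianPolyPacket (d : ℕ) (ν : Fin d → ℕ) : Set ((Fin d → ℝ) → ℂ) :=
  {f | ∃ (c : ((i : Fin d) → Fin (ν i + 1)) → ℂ) (g : (Fin d → ℝ) → ℂ),
    g ∈ GaussianPacket d ∧
    ∀ x : Fin d → ℝ, f x =
      (∑ θ : (i : Fin d) → Fin (ν i + 1), c θ * ∏ i, (x i : ℂ) ^ (θ i : ℕ)) * g x}

/-- The real Gaussian `x ↦ exp (-t |x|² + b · x)`, viewed as a complex-valued function. -/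
noncomputable def expQuad {d : ℕ} (t : ℝ) (b x : Fin d → ℝ) : ℂ :=
  (Real.exp (-t * ∑ i, x i ^ 2 + ∑ i, b i * x i) : ℝ)

lemma continuous_expQuad {d : ℕ} (t : ℝ) (b : Fin d → ℝ) : Continuous (expQuad t b) := by
  unfold expQuad
  fun_prop

lemma expQuad_mul {d : ℕ} (s t : ℝ) (b c x : Fin d → ℝ) :
    expQuad s b x * expQuad t c x = expQuad (s + t) (b + c) x := by
  simp only [expQuad, ← Complex.ofReal_mul, ← Real.exp_add, Pi.add_apply, add_mul,
    Finset.sum_add_distrib]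
  congr 2
  ring

lemma norm_expQuad {d : ℕ} (t : ℝ) (b x : Fin d → ℝ) :
    ‖expQuad t b x‖ = Real.exp (-t * ∑ i, x i ^ 2 + ∑ i, b i * x i) := by
  rw [expQuad, Complex.norm_real, Real.norm_of_nonneg (Real.exp_pos _).le]

lemma integrable_expQuad {d : ℕ} {t : ℝ} (ht : 0 < t) (b : Fin d → ℝ) :
    Integrable (expQuad t b) := by
  convert! GaussianFourier.integrable_cexp_neg_mul_sum_add (b := (t : ℂ)) (by simpa using ht)
    (fun i => (b i : ℂ)) using 2 with x
  simp [expQuad]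

lemma memLp_expQuad {d : ℕ} {t : ℝ} (ht : 0 < t) (b : Fin d → ℝ) {r : ℝ≥0∞}
    (hr : r ≠ 0) (hr' : r ≠ ∞) : MemLp (expQuad t b) r volume := by
  have hpos : 0 < r.toReal := ENNReal.toReal_pos hr hr'
  rw [← integrable_norm_rpow_iff (continuous_expQuad t b).aestronglyMeasurable hr hr']
  convert! (integrable_expQuad (mul_pos hpos ht) (r.toReal • b)).norm using 2 with x
  rw [norm_expQuad, norm_expQuad, ← Real.exp_mul]
  simp only [Pi.smul_apply, smul_eq_mul, mul_assoc, ← Finset.mul_sum]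
  ring_nf

lemma expQuad_mem_gaussianPacket {d : ℕ} {t : ℝ} (ht : 0 < t) (b : Fin d → ℝ) :
    expQuad t b ∈ GaussianPacket d := by
  refine ⟨(Real.exp (∑ i, b i ^ 2 / (4 * t)) : ℝ), 0, fun i => b i / (2 * t),
    (2 * t) • (1 : Matrix (Fin d) (Fin d) ℝ), 0, Matrix.PosDef.one.smul (by positivity),
    Matrix.isSymm_zero, fun x => ?_⟩
  have key : -t * ∑ i, x i ^ 2 + ∑ i, b i * x i =
      ∑ i, b i ^ 2 / (4 * t) + -(1 / 2) * ∑ i, 2 * t * (x i - b i / (2 * t)) ^ 2 := by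
    simp only [Finset.mul_sum, ← Finset.sum_add_distrib]
    refine Finset.sum_congr rfl fun i _ => ?_
    field_simp
    ring
  have hsum : ∑ i, ∑ j, ((((2 * t) • (1 : Matrix (Fin d) (Fin d) ℝ)) i j : ℂ) +
      Complex.I * (((0 : Matrix (Fin d) (Fin d) ℝ) i j : ℝ) : ℂ)) *
        ((x i : ℂ) - ((b i / (2 * t) : ℝ) : ℂ)) * ((x j : ℂ) - ((b j / (2 * t) : ℝ) : ℂ)) =
      ((∑ i, 2 * t * (x i - b i / (2 * t)) ^ 2 : ℝ) : ℂ) := by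
    push_cast
    refine Finset.sum_congr rfl fun i _ => ?_
    rw [Finset.sum_eq_single i]
    · simp
      ring
    · intro j _ hj
      simp [Matrix.one_apply_ne hj.symm]
    · simp
  rw [hsum, expQuad, key, Real.exp_add]
  simp

lemma const_mul_mem_gaussianPolyPacket {d : ℕ} (ν : Fin d → ℕ) (a : ℂ)
    {g : (Fin d → ℝ) → ℂ} (hg : g ∈ GaussianPacket d) :
    (fun x => a * g x) ∈ GaussianPolyPacket d ν := by
  refine ⟨Pi.single 0 a, g, hg, fun x => ?_⟩
  rw [Finset.sum_eq_single 0]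
  · simp
  · intro θ _ hθ
    simp [hθ]
  · simp

lemma tendsto_sum_sub_sq_cocompact {d : ℕ} (q : Fin d → ℝ) :
    Tendsto (fun x : Fin d → ℝ => ∑ i, (x i - q i) ^ 2) (cocompact (Fin d → ℝ)) atTop := by
  have hnorm : Tendsto (fun x : Fin d → ℝ => ‖x - q‖) (cocompact (Fin d → ℝ)) atTop :=
    tendsto_norm_cocompact_atTop.comp (Homeomorph.subRight q).isClosedEmbedding.tendsto_cocompact
  refine tendsto_atTop_mono (fun x => ?_) ((tendsto_pow_atTop two_ne_zero).comp hnorm)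
  have hle : ‖x - q‖ ≤ √(∑ i, (x i - q i) ^ 2) := by
    refine (pi_norm_le_iff_of_nonneg (Real.sqrt_nonneg _)).2 fun i => ?_
    rw [Real.norm_eq_abs, ← Real.sqrt_sq_eq_abs]
    exact Real.sqrt_le_sqrt (Finset.single_le_sum (f := fun i => (x i - q i) ^ 2)
      (fun i _ => sq_nonneg _) (Finset.mem_univ i))
  calc ‖x - q‖ ^ 2 ≤ √(∑ i, (x i - q i) ^ 2) ^ 2 := by gcongr
    _ = _ := Real.sq_sqrt (Finset.sum_nonneg fun i _ => sq_nonneg _)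

/-- The Gaussian `x ↦ exp (-|x - q|²)`, extended by `0` to the one-point compactification. -/
noncomputable def onePointGaussian {d : ℕ} (q : Fin d → ℝ) : C(OnePoint (Fin d → ℝ), ℂ) :=
  OnePoint.continuousMapMk
    ⟨fun x => (Real.exp (-∑ i, (x i - q i) ^ 2) : ℝ), by fun_prop⟩ 0 <| by
      rw [coclosedCompact_eq_cocompact, ← Complex.ofReal_zero]
      exact (Complex.continuous_ofReal.tendsto 0).comp <| Real.tendsto_exp_atBot.comp <|
        tendsto_neg_atTop_atBot.comp (tendsto_sum_sub_sq_cocompact q)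

lemma onePointGaussian_coe {d : ℕ} (q x : Fin d → ℝ) :
    onePointGaussian q (x : OnePoint (Fin d → ℝ)) =
      (Real.exp (-∑ i, (x i - q i) ^ 2) : ℝ) := rfl

lemma onePointGaussian_infty {d : ℕ} (q : Fin d → ℝ) :
    onePointGaussian q OnePoint.infty = 0 := rfl

lemma onePointGaussian_self {d : ℕ} (q : Fin d → ℝ) :
    onePointGaussian q (q : OnePoint (Fin d → ℝ)) = 1 := by
  simp [onePointGaussian_coe]

lemma eq_of_onePointGaussian_eq_one {d : ℕ} {q : Fin d → ℝ} {z : OnePoint (Fin d → ℝ)}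
    (h : onePointGaussian q z = 1) : z = q := by
  induction z using OnePoint.rec with
  | infty => simp [onePointGaussian_infty] at h
  | coe x =>
    rw [onePointGaussian_coe, Complex.ofReal_eq_one, Real.exp_eq_one_iff, neg_eq_zero,
      Finset.sum_eq_zero_iff_of_nonneg fun i _ => sq_nonneg _] at h
    congr 1
    ext i
    simpa [sub_eq_zero] using h i (Finset.mem_univ i)

lemma star_onePointGaussian {d : ℕ} (q : Fin d → ℝ) :
    star (onePointGaussian q) = onePointGaussian q := by
  ext z
  induction z using OnePoint.rec with
  | infty => simp [onePointGaussian_infty]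
  | coe x =>
    rw [ContinuousMap.star_apply, onePointGaussian_coe, Complex.star_def, Complex.conj_ofReal]

lemma star_range_onePointGaussian (d : ℕ) :
    star (Set.range (onePointGaussian (d := d))) = Set.range onePointGaussian := by
  ext F
  constructor
  · rintro ⟨q, hq⟩
    exact ⟨q, by rw [← star_star F, ← hq, star_onePointGaussian]⟩
  · rintro ⟨q, rfl⟩
    exact ⟨q, (star_onePointGaussian q).symm⟩

/-- By Stone–Weierstrass, the algebra generated by Gaussians is dense in the continuous functions
on the one-point compactification. -/
lemma exists_mem_adjoin_onePointGaussian_norm_sub_lt {d : ℕ} (F : C(OnePoint (Fin d → ℝ), ℂ))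
    {ε : ℝ} (hε : 0 < ε) :
    ∃ G ∈ Algebra.adjoin ℂ (Set.range (onePointGaussian (d := d))), ‖F - G‖ < ε := by
  let S : StarSubalgebra ℂ C(OnePoint (Fin d → ℝ), ℂ) :=
    StarAlgebra.adjoin ℂ (Set.range onePointGaussian)
  have hS : S.toSubalgebra = Algebra.adjoin ℂ (Set.range onePointGaussian) := by
    rw [StarAlgebra.adjoin_toSubalgebra, star_range_onePointGaussian, Set.union_self]
  have hmem (q : Fin d → ℝ) : onePointGaussian q ∈ S :=
    StarAlgebra.subset_adjoin ℂ _ (Set.mem_range_self q)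
  have hsep : S.SeparatesPoints := by
    intro y z hyz
    induction y using OnePoint.rec with
    | infty =>
      induction z using OnePoint.rec with
      | infty => exact absurd rfl hyz
      | coe q =>
        refine ⟨_, ⟨_, hmem q, rfl⟩, fun h => hyz ?_⟩
        exact eq_of_onePointGaussian_eq_one (h.trans (onePointGaussian_self q))
    | coe q =>
      refine ⟨_, ⟨_, hmem q, rfl⟩, fun h => hyz ?_⟩
      exact (eq_of_onePointGaussian_eq_one (h.symm.trans (onePointGaussian_self q))).symm
  have hF : F ∈ S.topologicalClosure := by
    rw [ContinuousMap.starSubalgebra_topologicalClosure_eq_top_of_separatesPoints S hsep]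
    trivial
  obtain ⟨G, hG, hdist⟩ := Metric.mem_closure_iff.1 hF ε hε
  refine ⟨G, ?_, by rwa [← dist_eq_norm]⟩
  rw [← hS]
  exact hG

lemma exists_eq_mul_expQuad_of_mem_closure {d : ℕ} {G : C(OnePoint (Fin d → ℝ), ℂ)}
    (hG : G ∈ Submonoid.closure (Set.range (onePointGaussian (d := d)))) :
    ∃ (a : ℂ) (t : ℝ) (b : Fin d → ℝ), 0 ≤ t ∧
      ∀ x : Fin d → ℝ, G (x : OnePoint (Fin d → ℝ)) = a * expQuad t b x := by
  induction hG using Submonoid.closure_induction with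
  | mem G hG =>
    obtain ⟨q, rfl⟩ := hG
    refine ⟨(Real.exp (-∑ i, q i ^ 2) : ℝ), 1, fun i => 2 * q i, zero_le_one, fun x => ?_⟩
    rw [onePointGaussian_coe, expQuad, ← Complex.ofReal_mul, ← Real.exp_add]
    congr 2
    simp only [Finset.mul_sum, ← Finset.sum_add_distrib, ← Finset.sum_neg_distrib]
    exact Finset.sum_congr rfl fun i _ => by ring
  | one => exact ⟨1, 0, 0, le_rfl, fun x => by simp [expQuad]⟩
  | mul G H _ _ ihG ihH =>
    obtain ⟨a, s, b, hs, hG⟩ := ihG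
    obtain ⟨a', t, c, ht, hH⟩ := ihH
    refine ⟨a * a', s + t, b + c, add_nonneg hs ht, fun x => ?_⟩
    rw [ContinuousMap.mul_apply, hG, hH, ← expQuad_mul]
    ring

/-- Multiplying an element of the algebra generated by Gaussians by the weight `exp (-|x|²)`
gives an element of the span of the polynomial Gaussian wave packets. -/
lemma exists_mem_span_ae_eq_mul_expQuad {d : ℕ} (ν : Fin d → ℕ) {r : ℝ≥0∞} (hr : r ≠ 0)
    (hr' : r ≠ ∞) {G : C(OnePoint (Fin d → ℝ), ℂ)}
    (hG : G ∈ Algebra.adjoin ℂ (Set.range (onePointGaussian (d := d)))) :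
    ∃ φ ∈ Submodule.span ℂ {f : Lp ℂ r (volume : Measure (Fin d → ℝ)) |
        ∃ g ∈ GaussianPolyPacket d ν, (f : (Fin d → ℝ) → ℂ) =ᵐ[volume] g},
      (φ : (Fin d → ℝ) → ℂ) =ᵐ[volume]
        fun x => G (x : OnePoint (Fin d → ℝ)) * expQuad 1 0 x := by
  rw [← Subalgebra.mem_toSubmodule, Algebra.adjoin_eq_span] at hG
  induction hG using Submodule.span_induction with
  | mem G hG =>
    obtain ⟨a, t, b, ht, hG⟩ := exists_eq_mul_expQuad_of_mem_closure hG
    have ht' : 0 < t + 1 := by positivity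
    have hmem : MemLp (fun x => a * expQuad (t + 1) b x) r volume :=
      (memLp_expQuad ht' b hr hr').const_mul a
    refine ⟨hmem.toLp, Submodule.subset_span ⟨_, const_mul_mem_gaussianPolyPacket ν a
      (expQuad_mem_gaussianPacket ht' b), hmem.coeFn_toLp⟩, ?_⟩
    filter_upwards [hmem.coeFn_toLp] with x hx
    rw [hx, hG, mul_assoc, expQuad_mul, add_zero]
  | zero =>
    refine ⟨0, zero_mem _, (Lp.coeFn_zero ℂ r volume).trans (.of_forall fun x => ?_)⟩
    simp
  | add G H _ _ ihG ihH =>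
    obtain ⟨φ, hφ, hφG⟩ := ihG
    obtain ⟨ψ, hψ, hψH⟩ := ihH
    refine ⟨φ + ψ, add_mem hφ hψ, ?_⟩
    filter_upwards [Lp.coeFn_add φ ψ, hφG, hψH] with x hx hx₁ hx₂
    rw [hx, Pi.add_apply, hx₁, hx₂, ContinuousMap.add_apply, add_mul]
  | smul c G _ ihG =>
    obtain ⟨φ, hφ, hφG⟩ := ihG
    refine ⟨c • φ, Submodule.smul_mem _ c hφ, ?_⟩
    filter_upwards [Lp.coeFn_smul c φ, hφG] with x hx hx₁
    rw [hx, Pi.smul_apply, hx₁, ContinuousMap.smul_apply, smul_eq_mul, smul_eq_mul, mul_assoc]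

/-- A compactly supported continuous function can be approximated, relative to the weight
`exp (-|x|²)`, by elements of the algebra generated by Gaussians. -/
lemma exists_mem_adjoin_norm_sub_mul_expQuad_le {d : ℕ} {g : (Fin d → ℝ) → ℂ}
    (hg : Continuous g) (hgc : HasCompactSupport g) {ε : ℝ} (hε : 0 < ε) :
    ∃ G ∈ Algebra.adjoin ℂ (Set.range (onePointGaussian (d := d))), ∀ x : Fin d → ℝ,
      ‖g x - G (x : OnePoint (Fin d → ℝ)) * expQuad 1 0 x‖ ≤ ε * ‖expQuad 1 0 x‖ := by
  have hc : HasCompactSupport fun x => g x * expQuad (-1) 0 x := hgc.mul_right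
  let F : C(OnePoint (Fin d → ℝ), ℂ) := OnePoint.continuousMapMk
    ⟨fun x => g x * expQuad (-1) 0 x, hg.mul (continuous_expQuad _ _)⟩ 0 <| by
      rw [coclosedCompact_eq_cocompact]
      exact hc.is_zero_at_infty
  obtain ⟨G, hG, hFG⟩ := exists_mem_adjoin_onePointGaussian_norm_sub_lt F hε
  refine ⟨G, hG, fun x => ?_⟩
  have hF : F (x : OnePoint (Fin d → ℝ)) * expQuad 1 0 x = g x := by
    change g x * expQuad (-1) 0 x * expQuad 1 0 x = g x
    rw [mul_assoc, expQuad_mul]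
    simp [expQuad]
  rw [← hF, ← sub_mul, norm_mul]
  gcongr
  exact ((F - G).norm_coe_le_norm x).trans hFG.le

/-- For `d ≥ 1`, `ν ∈ ℕ^d` and `1 ≤ r < ∞`, the linear span of the
polynomial Gaussian wave packets `𝒢_ν` is dense in `L^r(ℝ^d; ℂ)`. -/
theorem span_gaussianPolyPacket_dense_in_Lr
    (d : ℕ) (hd : 1 ≤ d) (ν : Fin d → ℕ) (r : ℝ≥0∞) (hr : Fact (1 ≤ r)) (hr' : r ≠ ∞) :
    Dense (↑(Submodule.span ℂ
      {f : Lp ℂ r (volume : Measure (Fin d → ℝ)) |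
        ∃ g ∈ GaussianPolyPacket d ν, (f : (Fin d → ℝ) → ℂ) =ᵐ[volume] g}) :
      Set (Lp ℂ r (volume : Measure (Fin d → ℝ)))) := by
  have hr0 : r ≠ 0 := (zero_lt_one.trans_le hr.out).ne'
  have hw : MemLp (expQuad (d := d) 1 0) r volume := memLp_expQuad one_pos 0 hr0 hr'
  refine Metric.dense_iff.2 fun f ε hε => ?_
  obtain ⟨g, hgc, hfg, hg, -⟩ := (Lp.memLp f).exists_hasCompactSupport_eLpNorm_sub_le hr'
    (ε := ENNReal.ofReal (ε / 3)) (by simpa using hε)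
  set W : ℝ := (eLpNorm (expQuad (d := d) 1 0) r volume).toReal with hW
  have hW0 : 0 ≤ W := ENNReal.toReal_nonneg
  obtain ⟨G, hG, hgG⟩ := exists_mem_adjoin_norm_sub_mul_expQuad_le hg hgc
    (ε := ε / 3 / (W + 1)) (by positivity)
  obtain ⟨φ, hφ, hφG⟩ := exists_mem_span_ae_eq_mul_expQuad ν hr0 hr' hG
  refine ⟨φ, ?_, hφ⟩
  have hgφ : eLpNorm (g - ⇑φ) r volume ≤ ENNReal.ofReal (ε / 3) := by
    calc eLpNorm (g - ⇑φ) r volume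
        ≤ ENNReal.ofReal (ε / 3 / (W + 1)) * eLpNorm (expQuad (d := d) 1 0) r volume := by
          refine eLpNorm_le_mul_eLpNorm_of_ae_le_mul ?_ r
          filter_upwards [hφG] with x hx
          rw [Pi.sub_apply, hx]
          exact hgG x
      _ = ENNReal.ofReal (ε / 3 / (W + 1) * W) := by
          rw [ENNReal.ofReal_mul (by positivity), hW, ENNReal.ofReal_toReal hw.eLpNorm_ne_top]
      _ ≤ ENNReal.ofReal (ε / 3) := by
          refine ENNReal.ofReal_le_ofReal ?_
          rw [div_mul_eq_mul_div, div_le_iff₀ (by positivity)]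
          gcongr
          linarith
  have hfφ : eLpNorm (⇑f - ⇑φ) r volume ≤ ENNReal.ofReal (ε / 3 + ε / 3) := by
    rw [← sub_add_sub_cancel (⇑f) g ⇑φ,
      ENNReal.ofReal_add (by positivity) (by positivity)]
    exact (eLpNorm_add_le ((Lp.aestronglyMeasurable f).sub hg.aestronglyMeasurable)
      (hg.aestronglyMeasurable.sub (Lp.aestronglyMeasurable φ)) hr.out).trans (add_le_add hfg hgφ)
  rw [Metric.mem_ball, dist_comm, Lp.dist_def]
  calc (eLpNorm (⇑f - ⇑φ) r volume).toReal ≤ ε / 3 + ε / 3 :=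
        ENNReal.toReal_le_of_le_ofReal (by positivity) hfφ
    _ < ε := by linarith
end

section
/- Let d ≥ 1, ν ∈ ℕ^d, and 1 ≤ r < ∞. Let (g_k)_{k∈ℕ} be a sequence in 𝒢_ν such that sup_k ‖g_k‖_{L^r(ℝ^d)} < ∞, and suppose there exists g ∈ L¹_loc(ℝ^d; ℂ) such that ∫ g_k φ → ∫ g φ for every smooth compactly supported test function φ : ℝ^d → ℂ. Then either g = 0 almost everywhere, or g is almost everywhere equal to a nonzero element of 𝒢_ν and moreover ‖g_k − g‖_{L^s(ℝ^d)} → 0 as k → ∞ for every 1 ≤ s ≤ ∞. -/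
open MeasureTheory Filter Complex
open scoped ENNReal

open scoped Topology

/-- The complex affine functions on `ℝ^d`. -/
def affineFunctions (d : ℕ) : Submodule ℂ ((Fin d → ℝ) → ℂ) :=
  Submodule.span ℂ (insert 1 (Set.range fun i x => (x i : ℂ)))

/-- The complex polynomial functions on `ℝ^d` of total degree at most `N`. -/
def polyFunctions (d N : ℕ) : Submodule ℂ ((Fin d → ℝ) → ℂ) :=
  affineFunctions d ^ N

instance finiteDimensional_polyFunctions (d N : ℕ) :
    FiniteDimensional ℂ (polyFunctions d N) :=
  Module.Finite.of_fg <| Submodule.FG.pow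
    (Submodule.fg_span ((Set.finite_range _).insert _)) N

theorem one_mem_affineFunctions (d : ℕ) : 1 ∈ affineFunctions d :=
  Submodule.subset_span (Set.mem_insert _ _)

theorem coord_mem_affineFunctions {d : ℕ} (i : Fin d) :
    (fun x : Fin d → ℝ => (x i : ℂ)) ∈ affineFunctions d :=
  Submodule.subset_span (Set.mem_insert_of_mem _ ⟨i, rfl⟩)

theorem comp_affine_mem_polyFunctions {d N : ℕ} {w : (Fin d → ℝ) → ℂ}
    (hw : w ∈ polyFunctions d N) (M : (Fin d → ℝ) →L[ℝ] (Fin d → ℝ)) (q : Fin d → ℝ) :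
    (fun y => w (M y + q)) ∈ polyFunctions d N := by
  let Φ : ((Fin d → ℝ) → ℂ) →ₐ[ℂ] ((Fin d → ℝ) → ℂ) :=
    { toFun := fun w y => w (M y + q)
      map_one' := rfl
      map_mul' := fun _ _ => rfl
      map_zero' := rfl
      map_add' := fun _ _ => rfl
      commutes' := fun _ => rfl }
  have hΦ : (affineFunctions d).map Φ.toLinearMap ≤ affineFunctions d := by
    rw [affineFunctions, Submodule.map_span_le]
    rintro f (rfl | ⟨i, rfl⟩)
    · exact one_mem_affineFunctions d
    · have : Φ.toLinearMap (fun x => (x i : ℂ)) =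
          ∑ j, ((M (Pi.single j 1) i : ℝ) : ℂ) • (fun x : Fin d → ℝ => (x j : ℂ)) +
            (q i : ℂ) • 1 := by
        funext y
        have h1 : M y = ∑ j, y j • M (Pi.single j 1) := by
          conv_lhs => rw [pi_eq_sum_univ' y]
          simp [map_sum]
        change ((M y + q) i : ℂ) = _
        simp [h1, mul_comm]
      rw [this]
      exact add_mem (sum_mem fun j _ => Submodule.smul_mem _ _ (coord_mem_affineFunctions j))
        (Submodule.smul_mem _ _ (one_mem_affineFunctions d))
  have h2 : (polyFunctions d N).map Φ.toLinearMap ≤ polyFunctions d N := by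
    rw [polyFunctions, Submodule.map_pow]
    exact pow_le_pow_left' hΦ N
  exact h2 (Submodule.mem_map_of_mem hw)

theorem monomial_mem_polyFunctions {d : ℕ} {ν θ : Fin d → ℕ} (h : ∀ i, θ i ≤ ν i) :
    (fun x : Fin d → ℝ => ∏ i, (x i : ℂ) ^ θ i) ∈ polyFunctions d (∑ i, ν i) := by
  have h1 : (1 : Submodule ℂ ((Fin d → ℝ) → ℂ)) ≤ affineFunctions d :=
    Submodule.one_le.mpr (one_mem_affineFunctions d)
  have h2 : ∀ s : Finset (Fin d), (∏ i ∈ s, (fun x : Fin d → ℝ => (x i : ℂ)) ^ θ i) ∈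
      affineFunctions d ^ ∑ i ∈ s, θ i := by
    intro s
    induction s using Finset.cons_induction with
    | empty => simp
    | cons i s hi ih =>
      rw [Finset.prod_cons, Finset.sum_cons, pow_add]
      exact Submodule.mul_mem_mul (Submodule.pow_mem_pow _ (coord_mem_affineFunctions i) _) ih
  have h3 := pow_le_pow_right₀ h1 (Finset.sum_le_sum fun i (_ : i ∈ Finset.univ) => h i)
    (h2 Finset.univ)
  rw [polyFunctions]
  convert h3 using 1
  funext x
  simp

theorem polyFunctions_growth {d N : ℕ} {w : (Fin d → ℝ) → ℂ} (hw : w ∈ polyFunctions d N) :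
    Continuous w ∧ ∃ C : ℝ, 0 ≤ C ∧ ∀ y, ‖w y‖ ≤ C * (1 + ‖y‖) ^ N := by
  have haff : ∀ m ∈ affineFunctions d, Continuous m ∧ ∃ C : ℝ, 0 ≤ C ∧
      ∀ y, ‖m y‖ ≤ C * (1 + ‖y‖) := by
    intro m hm
    induction hm using Submodule.span_induction with
    | mem x h =>
      rcases h with (rfl | ⟨i, rfl⟩)
      · exact ⟨continuous_const, 1, zero_le_one, fun y => by simp⟩
      · refine ⟨by fun_prop, 1, zero_le_one, fun y => ?_⟩
        have := norm_le_pi_norm y i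
        simp only [Complex.norm_real]
        linarith
    | zero => exact ⟨continuous_const, 0, le_rfl, fun y => by simp⟩
    | add x y _ _ hx hy =>
      obtain ⟨hx, C, hC, hCx⟩ := hx
      obtain ⟨hy, D, hD, hDy⟩ := hy
      refine ⟨hx.add hy, C + D, by positivity, fun z => ?_⟩
      rw [add_mul]
      exact (norm_add_le _ _).trans (add_le_add (hCx z) (hDy z))
    | smul a x _ hx =>
      obtain ⟨hx, C, hC, hCx⟩ := hx
      refine ⟨hx.const_smul a, ‖a‖ * C, by positivity, fun z => ?_⟩
      rw [Pi.smul_apply, norm_smul, mul_assoc]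
      exact mul_le_mul_of_nonneg_left (hCx z) (norm_nonneg _)
  induction N generalizing w with
  | zero =>
    rw [polyFunctions, pow_zero, Submodule.mem_one] at hw
    obtain ⟨a, rfl⟩ := hw
    exact ⟨continuous_const, ‖a‖, norm_nonneg _, fun y => by simp⟩
  | succ N ih =>
    rw [polyFunctions, pow_succ] at hw
    induction hw using Submodule.mul_induction_on' with
    | mem_mul_mem m hm n hn =>
      obtain ⟨hx, C, hC, hCx⟩ := ih hm
      obtain ⟨hy, D, hD, hDy⟩ := haff n hn
      refine ⟨hx.mul hy, C * D, by positivity, fun z => ?_⟩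
      rw [Pi.mul_apply, norm_mul, pow_succ, mul_mul_mul_comm]
      exact mul_le_mul (hCx z) (hDy z) (norm_nonneg _) (by positivity)
    | add x _ y _ hx hy =>
      obtain ⟨hx, C, hC, hCx⟩ := hx
      obtain ⟨hy, D, hD, hDy⟩ := hy
      refine ⟨hx.add hy, C + D, by positivity, fun z => ?_⟩
      rw [add_mul]
      exact (norm_add_le _ _).trans (add_le_add (hCx z) (hDy z))

/-- The complex polynomial functions on `ℝ^d` of degree at most `ν i` in each variable. -/
def boxPolyFunctions {d : ℕ} (ν : Fin d → ℕ) : Submodule ℂ ((Fin d → ℝ) → ℂ) :=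
  Submodule.span ℂ (Set.range fun (θ : (i : Fin d) → Fin (ν i + 1)) (x : Fin d → ℝ) =>
    ∏ i, (x i : ℂ) ^ (θ i : ℕ))

instance finiteDimensional_boxPolyFunctions {d : ℕ} (ν : Fin d → ℕ) :
    FiniteDimensional ℂ (boxPolyFunctions ν) :=
  Module.Finite.of_fg (Submodule.fg_span (Set.finite_range _))

theorem mem_boxPolyFunctions {d : ℕ} {ν : Fin d → ℕ} {P : (Fin d → ℝ) → ℂ} :
    P ∈ boxPolyFunctions ν ↔ ∃ c : ((i : Fin d) → Fin (ν i + 1)) → ℂ,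
      ∀ x, P x = ∑ θ, c θ * ∏ i, (x i : ℂ) ^ (θ i : ℕ) := by
  rw [boxPolyFunctions, Submodule.mem_span_range_iff_exists_fun]
  refine exists_congr fun c => ?_
  rw [funext_iff]
  refine forall_congr' fun x => ?_
  simp [eq_comm]

theorem boxPolyFunctions_le_polyFunctions {d : ℕ} (ν : Fin d → ℕ) :
    boxPolyFunctions ν ≤ polyFunctions d (∑ i, ν i) := by
  rw [boxPolyFunctions, Submodule.span_le]
  rintro _ ⟨θ, rfl⟩
  exact monomial_mem_polyFunctions fun i => Nat.lt_succ_iff.mp (θ i).2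

/-- The standard Gaussian `exp(-|y|²/2)`. -/
noncomputable def gaussWeight {d : ℕ} (y : Fin d → ℝ) : ℝ :=
  Real.exp (-(∑ i, y i ^ 2) / 2)

/-- The unimodular factor with quadratic phase `β(x, x) + ℓ(x)`. -/
noncomputable def quadPhase {d : ℕ} (β : (Fin d → ℝ) →L[ℝ] (Fin d → ℝ) →L[ℝ] ℝ)
    (ℓ : (Fin d → ℝ) →L[ℝ] ℝ) (x : Fin d → ℝ) : ℂ :=
  Complex.exp (Complex.I * ((β x x + ℓ x : ℝ) : ℂ))

theorem norm_quadPhase {d : ℕ} (β : (Fin d → ℝ) →L[ℝ] (Fin d → ℝ) →L[ℝ] ℝ)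
    (ℓ : (Fin d → ℝ) →L[ℝ] ℝ) (x : Fin d → ℝ) : ‖quadPhase β ℓ x‖ = 1 := by
  rw [quadPhase, mul_comm, Complex.norm_exp_ofReal_mul_I]

theorem packet_eq_gaussWeight_mul_quadPhase {d : ℕ} {A B : Matrix (Fin d) (Fin d) ℝ}
    {p q : Fin d → ℝ} {S : (Fin d → ℝ) →L[ℝ] (Fin d → ℝ)}
    {β : (Fin d → ℝ) →L[ℝ] (Fin d → ℝ) →L[ℝ] ℝ} {m : (Fin d → ℝ) →L[ℝ] ℝ}
    (hA : ∀ z : Fin d → ℝ, ∑ i, ∑ j, A i j * z i * z j = ∑ l, S z l ^ 2)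
    (hB : ∀ z : Fin d → ℝ, ∑ i, ∑ j, B i j * z i * z j = -2 * β z z)
    (hp : ∀ z : Fin d → ℝ, ∑ i, p i * z i = m z) (hβ : ∀ x y, β x y = β y x)
    (x : Fin d → ℝ) :
    Complex.exp (-(1/2 : ℂ) *
          ∑ i, ∑ j, ((A i j : ℂ) + Complex.I * (B i j : ℂ)) *
            ((x i : ℂ) - (q i : ℂ)) * ((x j : ℂ) - (q j : ℂ))) *
        Complex.exp (Complex.I * ∑ i, (p i : ℂ) * ((x i : ℂ) - (q i : ℂ))) =
      Complex.exp (Complex.I * ((β q q - m q : ℝ) : ℂ)) *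
        (gaussWeight (S (x - q)) * quadPhase β (m - (2 : ℝ) • β q) x) := by
  have hA' := congrArg (fun t : ℝ => (t : ℂ)) (hA (x - q))
  have hB' := congrArg (fun t : ℝ => (t : ℂ)) (hB (x - q))
  have hp' := congrArg (fun t : ℝ => (t : ℂ)) (hp (x - q))
  have hexp : β (x - q) (x - q) = β x x - 2 * β q x + β q q := by
    simp only [map_sub, _root_.sub_apply, hβ x q]
    ring
  rw [hexp] at hB'
  rw [map_sub m] at hp'
  push_cast [Pi.sub_apply] at hA' hB' hp'
  have hsum : ∑ i, ∑ j, ((A i j : ℂ) + Complex.I * (B i j : ℂ)) *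
            ((x i : ℂ) - (q i : ℂ)) * ((x j : ℂ) - (q j : ℂ)) =
      (∑ l, (S (x - q) l : ℂ) ^ 2) +
        Complex.I * (-2 * ((β x x : ℂ) - 2 * (β q x : ℂ) + (β q q : ℂ))) := by
    rw [← hA', ← hB', Finset.mul_sum, ← Finset.sum_add_distrib]
    refine Finset.sum_congr rfl fun i _ => ?_
    rw [Finset.mul_sum, ← Finset.sum_add_distrib]
    refine Finset.sum_congr rfl fun j _ => ?_
    ring
  rw [hsum, hp', gaussWeight, quadPhase, Complex.ofReal_exp, ← Complex.exp_add,
    ← Complex.exp_add, ← Complex.exp_add]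
  congr 1
  push_cast [_root_.sub_apply, _root_.smul_apply, smul_eq_mul]
  ring

theorem exists_normalForm {d : ℕ} {ν : Fin d → ℕ} {g : (Fin d → ℝ) → ℂ}
    (hg : g ∈ GaussianPolyPacket d ν) :
    ∃ (w : (Fin d → ℝ) → ℂ) (S M : (Fin d → ℝ) →L[ℝ] (Fin d → ℝ)) (q : Fin d → ℝ)
      (β : (Fin d → ℝ) →L[ℝ] (Fin d → ℝ) →L[ℝ] ℝ) (ℓ : (Fin d → ℝ) →L[ℝ] ℝ),
      w ∈ polyFunctions d (∑ i, ν i) ∧ (fun x => w (S (x - q))) ∈ boxPolyFunctions ν ∧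
      S * M = 1 ∧ M * S = 1 ∧ (∀ x y, β x y = β y x) ∧
      ∀ x, g x = w (S (x - q)) * gaussWeight (S (x - q)) * quadPhase β ℓ x := by
  obtain ⟨c, g₀, ⟨a, p, q, A, B, hA, hB, hg₀⟩, hg⟩ := hg
  open scoped MatrixOrder in
  obtain ⟨R, hR⟩ : ∃ R : Matrix (Fin d) (Fin d) ℝ, A = R.transpose * R := by
    obtain ⟨R, hR⟩ := CStarAlgebra.nonneg_iff_eq_star_mul_self.mp hA.posSemidef.nonneg
    exact ⟨R, by rw [hR, Matrix.star_eq_conjTranspose, Matrix.conjTranspose_eq_transpose_of_trivial]⟩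
  have hdet : IsUnit R.det := by
    have h := hA.det_pos.ne'
    rw [hR, Matrix.det_mul] at h
    exact (right_ne_zero_of_mul h).isUnit
  let S : (Fin d → ℝ) →L[ℝ] (Fin d → ℝ) := R.mulVecLin.toContinuousLinearMap
  let M : (Fin d → ℝ) →L[ℝ] (Fin d → ℝ) := R⁻¹.mulVecLin.toContinuousLinearMap
  have hSM : S * M = 1 := by
    ext1 x
    simp [S, M, Matrix.mul_nonsing_inv _ hdet]
  have hMS : M * S = 1 := by
    ext1 x
    simp [S, M, Matrix.nonsing_inv_mul _ hdet]
  have hMS' : ∀ x, M (S x) = x := fun x => DFunLike.congr_fun hMS x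
  let β : (Fin d → ℝ) →L[ℝ] (Fin d → ℝ) →L[ℝ] ℝ :=
    ∑ i, ∑ j, (-(B i j) / 2) • (ContinuousLinearMap.proj (R := ℝ) (φ := fun _ => ℝ) i).smulRight
      (ContinuousLinearMap.proj (R := ℝ) (φ := fun _ : Fin d => ℝ) j)
  have hβ_apply : ∀ x y, β x y = ∑ i, ∑ j, -(B i j) / 2 * (x i * y j) := by
    intro x y
    simp [β]
  have hβ : ∀ x y, β x y = β y x := by
    intro x y
    rw [hβ_apply, hβ_apply, Finset.sum_comm]
    refine Finset.sum_congr rfl fun i _ => Finset.sum_congr rfl fun j _ => ?_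
    rw [hB.apply]
    ring
  let m : (Fin d → ℝ) →L[ℝ] ℝ :=
    ∑ i, p i • ContinuousLinearMap.proj (R := ℝ) (φ := fun _ : Fin d => ℝ) i
  let a' : ℂ := a * Complex.exp (Complex.I * ((β q q - m q : ℝ) : ℂ))
  let P : (Fin d → ℝ) → ℂ := fun x => ∑ θ : (i : Fin d) → Fin (ν i + 1),
    c θ * ∏ i, (x i : ℂ) ^ (θ i : ℕ)
  have hP : a' • P ∈ boxPolyFunctions ν :=
    Submodule.smul_mem _ _ (mem_boxPolyFunctions.mpr ⟨c, fun x => rfl⟩)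
  have hw : ∀ x, (fun y => (a' • P) (M y + q)) (S (x - q)) = (a' • P) x := by
    intro x
    simp only [hMS', sub_add_cancel]
  refine ⟨fun y => (a' • P) (M y + q), S, M, q, β, m - (2 : ℝ) • β q,
    comp_affine_mem_polyFunctions (boxPolyFunctions_le_polyFunctions ν hP) M q, ?_, hSM, hMS, hβ,
    fun x => ?_⟩
  · simp only [hMS', sub_add_cancel]
    exact hP
  · have key := packet_eq_gaussWeight_mul_quadPhase (A := A) (B := B) (p := p) (q := q) (S := S)
      (β := β) (m := m) ?_ ?_ ?_ hβ x
    · rw [hg, hg₀, hw, mul_assoc a, key, Pi.smul_apply, smul_eq_mul]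
      simp only [a', P]
      ring
    · intro z
      have h1 : z ⬝ᵥ A.mulVec z = R.mulVec z ⬝ᵥ R.mulVec z := by
        rw [hR, ← Matrix.mulVec_mulVec, Matrix.dotProduct_mulVec, Matrix.vecMul_transpose]
      simp only [dotProduct, Matrix.mulVec, Finset.mul_sum] at h1
      simp only [S, LinearMap.coe_toContinuousLinearMap', Matrix.mulVecLin_apply, Matrix.mulVec,
        dotProduct, pow_two]
      rw [Finset.sum_congr rfl fun i _ => Finset.mul_sum _ _ _, ← h1]
      exact Finset.sum_congr rfl fun i _ => Finset.sum_congr rfl fun j _ => by ring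
    · intro z
      rw [hβ_apply, Finset.mul_sum]
      refine Finset.sum_congr rfl fun i _ => ?_
      rw [Finset.mul_sum]
      exact Finset.sum_congr rfl fun j _ => by ring
    · intro z
      simp [m]

theorem normalForm_mem_gaussianPolyPacket {d : ℕ} {ν : Fin d → ℕ} {P : (Fin d → ℝ) → ℂ}
    (hP : P ∈ boxPolyFunctions ν) {S M : (Fin d → ℝ) →L[ℝ] (Fin d → ℝ)} (hMS : M * S = 1)
    (q : Fin d → ℝ) {β : (Fin d → ℝ) →L[ℝ] (Fin d → ℝ) →L[ℝ] ℝ} (hβ : ∀ x y, β x y = β y x)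
    (ℓ : (Fin d → ℝ) →L[ℝ] ℝ) :
    (fun x => P x * gaussWeight (S (x - q)) * quadPhase β ℓ x) ∈ GaussianPolyPacket d ν := by
  obtain ⟨c, hc⟩ := mem_boxPolyFunctions.mp hP
  let R : Matrix (Fin d) (Fin d) ℝ := LinearMap.toMatrix' S.toLinearMap
  have hR : ∀ z, R.mulVec z = S z := fun z => LinearMap.toMatrix'_mulVec _ z
  have hMS' : ∀ x, M (S x) = x := fun x => DFunLike.congr_fun hMS x
  let m : (Fin d → ℝ) →L[ℝ] ℝ := ℓ + (2 : ℝ) • β q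
  let B : Matrix (Fin d) (Fin d) ℝ :=
    Matrix.of fun i j => -2 * β (Pi.single i 1) (Pi.single j 1)
  have hlin : ∀ (f : (Fin d → ℝ) →L[ℝ] ℝ) (z : Fin d → ℝ), f z = ∑ i, f (Pi.single i 1) * z i := by
    intro f z
    conv_lhs => rw [pi_eq_sum_univ' z]
    simp [map_sum, mul_comm]
  refine ⟨c, _, ⟨(Complex.exp (Complex.I * ((β q q - m q : ℝ) : ℂ)))⁻¹, fun i => m (Pi.single i 1),
    q, R.transpose * R, B, ?_, ?_, fun x => rfl⟩, fun x => ?_⟩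
  · have := Matrix.PosDef.conjTranspose_mul_self R (fun x y hxy => by
      rw [hR, hR] at hxy
      rw [← hMS' x, ← hMS' y, hxy])
    rwa [Matrix.conjTranspose_eq_transpose_of_trivial] at this
  · refine Matrix.IsSymm.ext fun i j => ?_
    simp only [B, Matrix.of_apply]
    rw [hβ]
  · have key := packet_eq_gaussWeight_mul_quadPhase (A := R.transpose * R) (B := B)
      (p := fun i => m (Pi.single i 1)) (q := q) (S := S) (β := β) (m := m) ?_ ?_ ?_ hβ x
    · have hℓ : m - (2 : ℝ) • β q = ℓ := by simp [m]
      rw [mul_assoc _ (Complex.exp (-(1/2 : ℂ) * _)), key, hℓ, ← mul_assoc (Complex.exp _)⁻¹,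
        inv_mul_cancel₀ (Complex.exp_ne_zero _), one_mul, ← hc x, ← mul_assoc]
    · intro z
      have h1 : z ⬝ᵥ (R.transpose * R).mulVec z = S z ⬝ᵥ S z := by
        rw [← Matrix.mulVec_mulVec, Matrix.dotProduct_mulVec, Matrix.vecMul_transpose, hR]
      have h2 : ∑ l, S z l ^ 2 = S z ⬝ᵥ S z := by simp [dotProduct, pow_two]
      rw [h2, ← h1]
      simp only [dotProduct, Matrix.mulVec, Finset.mul_sum]
      exact Finset.sum_congr rfl fun i _ => Finset.sum_congr rfl fun j _ => by ring
    · intro z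
      rw [hlin (β z) z, Finset.mul_sum, Finset.sum_comm]
      refine Finset.sum_congr rfl fun j _ => ?_
      rw [hβ, hlin (β (Pi.single j 1)) z, Finset.sum_mul, Finset.mul_sum]
      refine Finset.sum_congr rfl fun i _ => ?_
      simp only [B, Matrix.of_apply]
      rw [hβ (Pi.single i 1)]
      ring
    · exact fun z => (hlin m z).symm

theorem exists_subseq_tendsto_or_normalized {X : Type*} [NormedAddCommGroup X] [NormedSpace ℝ X]
    [ProperSpace X] (x : ℕ → X) :
    ∃ φ : ℕ → ℕ, StrictMono φ ∧ ((∃ a, Tendsto (fun k => x (φ k)) atTop (𝓝 a)) ∨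
      (Tendsto (fun k => ‖x (φ k)‖) atTop atTop ∧
        ∃ a, a ≠ 0 ∧ Tendsto (fun k => ‖x (φ k)‖⁻¹ • x (φ k)) atTop (𝓝 a))) := by
  by_cases h : ∃ C, ∃ᶠ k in atTop, ‖x k‖ ≤ C
  · obtain ⟨C, hC⟩ := h
    obtain ⟨a, -, φ, hφ, ha⟩ := tendsto_subseq_of_frequently_bounded
      (Metric.isBounded_closedBall (x := (0 : X)) (r := C)) (x := x) (by simpa using hC)
    exact ⟨φ, hφ, Or.inl ⟨a, ha⟩⟩
  · have htop : Tendsto (fun k => ‖x k‖) atTop atTop := by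
      refine tendsto_atTop.mpr fun C => ?_
      have := not_frequently.mp (not_exists.mp h C)
      exact this.mono fun k hk => (not_le.mp hk).le
    obtain ⟨a, ha, φ, hφ, hlim⟩ := (isCompact_sphere (0 : X) 1).tendsto_subseq'
      (x := fun k => ‖x k‖⁻¹ • x k) (by
        refine Eventually.frequently ?_
        filter_upwards [htop.eventually_gt_atTop 0] with k hk
        simp [norm_smul, hk.ne'])
    refine ⟨φ, hφ, Or.inr ⟨htop.comp hφ.tendsto_atTop, a, ?_, hlim⟩⟩
    rintro rfl
    simp at ha

theorem tendsto_integral_exp_mul_of_norm_atTop {d : ℕ} (f : (Fin d → ℝ) → ℂ)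
    {ℓ : ℕ → (Fin d → ℝ) →L[ℝ] ℝ} (hℓ : Tendsto (fun k => ‖ℓ k‖) atTop atTop) :
    Tendsto (fun k => ∫ x, Complex.exp (Complex.I * ((ℓ k x : ℝ) : ℂ)) * f x) atTop (𝓝 0) := by
  have : ProperSpace ((Fin d → ℝ) →L[ℝ] ℝ) := FiniteDimensional.proper ℝ _
  have h1 : Tendsto (fun k => (-(2 * Real.pi)⁻¹) • ℓ k) atTop
      (cocompact (StrongDual ℝ (Fin d → ℝ))) := by
    rw [← Metric.cobounded_eq_cocompact, ← tendsto_norm_atTop_iff_cobounded]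
    simp_rw [norm_smul]
    exact hℓ.const_mul_atTop (norm_pos_iff.mpr (neg_ne_zero.mpr (by positivity)))
  refine ((tendsto_integral_exp_smul_cocompact f volume).comp h1).congr fun k => ?_
  refine integral_congr_ae (Eventually.of_forall fun x => ?_)
  simp only [Circle.smul_def, Real.fourierChar_apply, smul_eq_mul, _root_.smul_apply]
  congr 2
  push_cast
  have : (Real.pi : ℂ) ≠ 0 := by exact_mod_cast Real.pi_ne_zero
  field_simp

theorem quadPhase_eq_mul {d : ℕ} (β : (Fin d → ℝ) →L[ℝ] (Fin d → ℝ) →L[ℝ] ℝ)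
    (ℓ : (Fin d → ℝ) →L[ℝ] ℝ) (x : Fin d → ℝ) :
    quadPhase β ℓ x = quadPhase β 0 x * Complex.exp (Complex.I * ((ℓ x : ℝ) : ℂ)) := by
  rw [quadPhase, quadPhase, ← Complex.exp_add]
  congr 1
  simp [mul_add]

theorem tendsto_clm_apply {E F ι : Type*} [NormedAddCommGroup E] [NormedSpace ℝ E]
    [NormedAddCommGroup F] [NormedSpace ℝ F] {l : Filter ι} {T : ι → E →L[ℝ] F} {T₀ : E →L[ℝ] F}
    {x : ι → E} {x₀ : E} (hT : Tendsto T l (𝓝 T₀)) (hx : Tendsto x l (𝓝 x₀)) :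
    Tendsto (fun k => T k (x k)) l (𝓝 (T₀ x₀)) :=
  ((isBoundedBilinearMap_apply (𝕜 := ℝ) (E := E) (F := F)).continuous.tendsto (T₀, x₀)).comp
    (hT.prodMk_nhds hx)

theorem tendsto_quadPhase {d : ℕ} {ι : Type*} {l : Filter ι}
    {β : ι → (Fin d → ℝ) →L[ℝ] (Fin d → ℝ) →L[ℝ] ℝ} {b : (Fin d → ℝ) →L[ℝ] (Fin d → ℝ) →L[ℝ] ℝ}
    {ℓ : ι → (Fin d → ℝ) →L[ℝ] ℝ} {m : (Fin d → ℝ) →L[ℝ] ℝ} {x : ι → Fin d → ℝ} {z : Fin d → ℝ}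
    (hβ : Tendsto β l (𝓝 b)) (hℓ : Tendsto ℓ l (𝓝 m)) (hx : Tendsto x l (𝓝 z)) :
    Tendsto (fun k => quadPhase (β k) (ℓ k) (x k)) l (𝓝 (quadPhase b m z)) := by
  have h1 : Tendsto (fun k => β k (x k) (x k) + ℓ k (x k)) l (𝓝 (b z z + m z)) :=
    (tendsto_clm_apply (tendsto_clm_apply hβ hx) hx).add (tendsto_clm_apply hℓ hx)
  exact (Complex.continuous_exp.tendsto _).comp
    (((Complex.continuous_ofReal.tendsto _).comp h1).const_mul Complex.I)

theorem continuous_quadPhase_apply {d : ℕ} (β : (Fin d → ℝ) →L[ℝ] (Fin d → ℝ) →L[ℝ] ℝ)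
    (ℓ : (Fin d → ℝ) →L[ℝ] ℝ) : Continuous (quadPhase β ℓ) := by
  unfold quadPhase
  fun_prop

theorem tendsto_integral_quadPhase_of_linear_atTop {d : ℕ} {f : (Fin d → ℝ) → ℂ}
    (hf : Integrable f) {β : ℕ → (Fin d → ℝ) →L[ℝ] (Fin d → ℝ) →L[ℝ] ℝ}
    {b : (Fin d → ℝ) →L[ℝ] (Fin d → ℝ) →L[ℝ] ℝ} (hβ : Tendsto β atTop (𝓝 b))
    {ℓ : ℕ → (Fin d → ℝ) →L[ℝ] ℝ} (hℓ : Tendsto (fun k => ‖ℓ k‖) atTop atTop) :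
    Tendsto (fun k => ∫ x, f x * quadPhase (β k) (ℓ k) x) atTop (𝓝 0) := by
  have hInt : ∀ β ℓ, Integrable fun x => f x * quadPhase β ℓ x := fun β ℓ =>
    hf.mul_bdd (c := 1) (continuous_quadPhase_apply β ℓ).aestronglyMeasurable
      (Eventually.of_forall fun x => (norm_quadPhase β ℓ x).le)
  have h1 := tendsto_integral_exp_mul_of_norm_atTop (fun x => f x * quadPhase b 0 x) hℓ
  have h2 : Tendsto (fun k => ∫ x, (f x * quadPhase (β k) (ℓ k) x - f x * quadPhase b (ℓ k) x))
      atTop (𝓝 0) := by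
    have := tendsto_integral_of_dominated_convergence (μ := (volume : Measure (Fin d → ℝ)))
      (F := fun k x => f x * quadPhase (β k) (ℓ k) x - f x * quadPhase b (ℓ k) x)
      (f := fun _ => 0) (fun x => 2 * ‖f x‖)
      (fun k => ((hInt _ _).sub (hInt _ _)).aestronglyMeasurable) (hf.norm.const_mul 2)
      (fun k => Eventually.of_forall fun x => ?_) (Eventually.of_forall fun x => ?_)
    · simpa using this
    · refine (norm_sub_le _ _).trans (le_of_eq ?_)
      rw [norm_mul, norm_mul, norm_quadPhase, norm_quadPhase]
      ring
    · have h3 : Tendsto (fun k => quadPhase (β k) 0 x) atTop (𝓝 (quadPhase b 0 x)) :=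
        tendsto_quadPhase hβ tendsto_const_nhds tendsto_const_nhds
      rw [tendsto_zero_iff_norm_tendsto_zero]
      have h4 : Tendsto (fun k => ‖f x‖ * ‖quadPhase (β k) 0 x - quadPhase b 0 x‖) atTop (𝓝 0) := by
        simpa using ((tendsto_sub_nhds_zero_iff.mpr h3).norm.const_mul ‖f x‖)
      refine h4.congr fun k => ?_
      rw [quadPhase_eq_mul (β k) (ℓ k), quadPhase_eq_mul b (ℓ k), ← mul_sub, ← sub_mul, norm_mul,
        norm_mul, mul_comm Complex.I, Complex.norm_exp_ofReal_mul_I, mul_one]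
  have h3 := h2.add h1
  rw [add_zero] at h3
  refine h3.congr fun k => ?_
  rw [integral_sub (hInt _ _) (hInt _ _)]
  have : ∀ x, Complex.exp (Complex.I * ((ℓ k x : ℝ) : ℂ)) * (f x * quadPhase b 0 x) =
      f x * quadPhase b (ℓ k) x := fun x => by rw [quadPhase_eq_mul b (ℓ k)]; ring
  simp only [this, sub_add_cancel]

theorem quadPhase_add_mul_conj {d : ℕ} {β : (Fin d → ℝ) →L[ℝ] (Fin d → ℝ) →L[ℝ] ℝ}
    (hβ : ∀ x y, β x y = β y x) (ℓ : (Fin d → ℝ) →L[ℝ] ℝ) (z h : Fin d → ℝ) :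
    quadPhase β ℓ (z + h) * starRingEnd ℂ (quadPhase β ℓ z) =
      quadPhase β ℓ h * Complex.exp (Complex.I * ((((2 : ℝ) • β h) z : ℝ) : ℂ)) := by
  rw [quadPhase, quadPhase, quadPhase, ← Complex.exp_conj, ← Complex.exp_add, ← Complex.exp_add]
  congr 1
  simp only [map_mul, Complex.conj_I, Complex.conj_ofReal, map_add, _root_.add_apply, hβ z h,
    _root_.smul_apply, smul_eq_mul]
  push_cast
  ring

/-- Weyl differencing: the square of an oscillatory integral is an average over translations. -/
theorem integral_mul_conj_integral {d : ℕ} {F : (Fin d → ℝ) → ℂ} (hF : Integrable F) :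
    Integrable (fun p : (Fin d → ℝ) × (Fin d → ℝ) =>
      F (p.1 + p.2) * starRingEnd ℂ (F p.1)) (volume.prod volume) ∧
    (∫ x, F x) * starRingEnd ℂ (∫ x, F x) =
      ∫ h, ∫ z, F (z + h) * starRingEnd ℂ (F z) := by
  have hmp := measurePreserving_prod_add (volume : Measure (Fin d → ℝ)) volume
  have hInt : Integrable (fun p : (Fin d → ℝ) × (Fin d → ℝ) => F p.2 * starRingEnd ℂ (F p.1))
      (volume.prod volume) := by
    have hc : Integrable (fun x => starRingEnd ℂ (F x)) := by
      simpa using (Complex.conjCLE.toContinuousLinearMap.integrable_comp hF)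
    exact (hc.mul_prod hF).congr (Eventually.of_forall fun p => mul_comm _ _)
  have hInt' : Integrable (fun p : (Fin d → ℝ) × (Fin d → ℝ) =>
      F (p.1 + p.2) * starRingEnd ℂ (F p.1)) (volume.prod volume) :=
    hmp.integrable_comp_of_integrable hInt
  refine ⟨hInt', ?_⟩
  rw [integral_integral_swap (f := fun h z => F (z + h) * starRingEnd ℂ (F z)) hInt'.swap]
  have : ∀ z, ∫ h, F (z + h) * starRingEnd ℂ (F z) = (∫ x, F x) * starRingEnd ℂ (F z) := by
    intro z
    rw [integral_mul_const, integral_add_left_eq_self F z]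
  simp only [this]
  rw [integral_const_mul, integral_conj]

theorem tendsto_integral_quadPhase_of_bilinear_atTop {d : ℕ} {f : (Fin d → ℝ) → ℂ}
    (hf : Integrable f) {β : ℕ → (Fin d → ℝ) →L[ℝ] (Fin d → ℝ) →L[ℝ] ℝ}
    (hsymm : ∀ k x y, β k x y = β k y x) (hβ : Tendsto (fun k => ‖β k‖) atTop atTop)
    {b : (Fin d → ℝ) →L[ℝ] (Fin d → ℝ) →L[ℝ] ℝ} (hb : b ≠ 0)
    (hβb : Tendsto (fun k => ‖β k‖⁻¹ • β k) atTop (𝓝 b))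
    (ℓ : ℕ → (Fin d → ℝ) →L[ℝ] ℝ) :
    Tendsto (fun k => ∫ x, f x * quadPhase (β k) (ℓ k) x) atTop (𝓝 0) := by
  have hInt : ∀ β ℓ, Integrable fun x => f x * quadPhase β ℓ x := fun β ℓ =>
    hf.mul_bdd (c := 1) (continuous_quadPhase_apply β ℓ).aestronglyMeasurable
      (Eventually.of_forall fun x => (norm_quadPhase β ℓ x).le)
  have hker : ∀ᵐ h : Fin d → ℝ, b h ≠ 0 := by
    have hne : LinearMap.ker b.toLinearMap ≠ ⊤ := fun htop => hb <| by
      ext1 h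
      have : h ∈ LinearMap.ker b.toLinearMap := htop ▸ Submodule.mem_top
      simpa using this
    have := Measure.addHaar_submodule (volume : Measure (Fin d → ℝ)) _ hne
    refine (measure_eq_zero_iff_ae_notMem.mp this).mono fun h hh => ?_
    simpa using hh
  have hJ : Tendsto (fun k => ∫ h, ∫ z, (f (z + h) * quadPhase (β k) (ℓ k) (z + h)) *
      starRingEnd ℂ (f z * quadPhase (β k) (ℓ k) z)) atTop (𝓝 0) := by
    have hD : Integrable fun h => ∫ z, ‖f (z + h) * starRingEnd ℂ (f z)‖ :=
      (integral_mul_conj_integral hf).1.norm.integral_prod_right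
    have := tendsto_integral_of_dominated_convergence (μ := (volume : Measure (Fin d → ℝ)))
      (F := fun k h => ∫ z, (f (z + h) * quadPhase (β k) (ℓ k) (z + h)) *
        starRingEnd ℂ (f z * quadPhase (β k) (ℓ k) z)) (f := fun _ => 0)
      (fun h => ∫ z, ‖f (z + h) * starRingEnd ℂ (f z)‖)
      (fun k => (integral_mul_conj_integral
        (hInt (β k) (ℓ k))).1.integral_prod_right.aestronglyMeasurable) hD
      (fun k => Eventually.of_forall fun h => ?_) (hker.mono fun h hh => ?_)
    · simpa using this
    · refine (norm_integral_le_integral_norm _).trans (le_of_eq ?_)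
      simp [norm_quadPhase]
    · have hnorm : Tendsto (fun k => ‖(2 : ℝ) • β k h‖) atTop atTop := by
        have h1 : Tendsto (fun k => ‖(‖β k‖⁻¹ • β k) h‖) atTop (𝓝 ‖b h‖) :=
          (((ContinuousLinearMap.apply ℝ _ h).continuous.tendsto b).comp hβb).norm
        have h2 := (hβ.atTop_mul_pos (norm_pos_iff.mpr hh) h1).const_mul_atTop two_pos
        refine h2.congr' ?_
        filter_upwards [hβ.eventually_gt_atTop 0] with k hk
        rw [_root_.smul_apply, norm_smul, norm_smul, norm_inv, Real.norm_of_nonneg hk.le, Real.norm_ofNat,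
          mul_inv_cancel_left₀ hk.ne']
      have h3 := tendsto_integral_exp_mul_of_norm_atTop
        (fun z => f (z + h) * starRingEnd ℂ (f z)) hnorm
      rw [tendsto_zero_iff_norm_tendsto_zero] at h3 ⊢
      refine h3.congr fun k => ?_
      have h4 : ∀ z, (f (z + h) * quadPhase (β k) (ℓ k) (z + h)) *
          starRingEnd ℂ (f z * quadPhase (β k) (ℓ k) z) = quadPhase (β k) (ℓ k) h *
            (Complex.exp (Complex.I * ((((2 : ℝ) • β k h) z : ℝ) : ℂ)) *
              (f (z + h) * starRingEnd ℂ (f z))) := by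
        intro z
        rw [map_mul, mul_mul_mul_comm, quadPhase_add_mul_conj (hsymm k)]
        ring
      simp only [h4]
      rw [integral_const_mul, norm_mul, norm_quadPhase, one_mul]
  rw [tendsto_zero_iff_norm_tendsto_zero] at hJ ⊢
  have h5 := hJ.sqrt
  rw [Real.sqrt_zero] at h5
  refine h5.congr fun k => ?_
  rw [← (integral_mul_conj_integral (hInt (β k) (ℓ k))).2, norm_mul, RCLike.norm_conj,
    Real.sqrt_mul_self (norm_nonneg _)]

/-- The polynomial function of total degree at most `N` with given coordinates in a fixed basis. -/
noncomputable def polyEval (d N : ℕ) (c : Fin (Module.finrank ℂ (polyFunctions d N)) → ℂ)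
    (y : Fin d → ℝ) : ℂ :=
  ∑ i, c i * (Module.finBasis ℂ (polyFunctions d N) i : (Fin d → ℝ) → ℂ) y

section polyEval

variable {d N : ℕ}

theorem polyEval_eq_sum_smul (c : Fin (Module.finrank ℂ (polyFunctions d N)) → ℂ) :
    polyEval d N c =
      ((∑ i, c i • Module.finBasis ℂ (polyFunctions d N) i : polyFunctions d N) :
        (Fin d → ℝ) → ℂ) := by
  funext y
  simp [polyEval]

theorem exists_polyEval_eq {w : (Fin d → ℝ) → ℂ} (hw : w ∈ polyFunctions d N) :
    ∃ c, w = polyEval d N c := by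
  refine ⟨(Module.finBasis ℂ (polyFunctions d N)).repr ⟨w, hw⟩, ?_⟩
  rw [polyEval_eq_sum_smul, Module.Basis.sum_repr]

theorem eq_zero_of_polyEval_eq_zero {c : Fin (Module.finrank ℂ (polyFunctions d N)) → ℂ}
    (h : ∀ y, polyEval d N c y = 0) : c = 0 := by
  have h1 : polyEval d N c = 0 := funext h
  rw [polyEval_eq_sum_smul, ZeroMemClass.coe_eq_zero] at h1
  exact funext (Fintype.linearIndependent_iff.mp
    (Module.finBasis ℂ (polyFunctions d N)).linearIndependent c h1)

theorem polyEval_add (c c' : Fin (Module.finrank ℂ (polyFunctions d N)) → ℂ) (y : Fin d → ℝ) :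
    polyEval d N (c + c') y = polyEval d N c y + polyEval d N c' y := by
  simp [polyEval, add_mul, Finset.sum_add_distrib]

theorem polyEval_smul (a : ℂ) (c : Fin (Module.finrank ℂ (polyFunctions d N)) → ℂ)
    (y : Fin d → ℝ) : polyEval d N (a • c) y = a * polyEval d N c y := by
  simp [polyEval, Finset.mul_sum, mul_assoc]

theorem tendsto_polyEval {ι : Type*} {l : Filter ι}
    {c : ι → Fin (Module.finrank ℂ (polyFunctions d N)) → ℂ}
    {c₀ : Fin (Module.finrank ℂ (polyFunctions d N)) → ℂ}
    {y : ι → Fin d → ℝ} {y₀ : Fin d → ℝ} (hc : Tendsto c l (𝓝 c₀)) (hy : Tendsto y l (𝓝 y₀)) :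
    Tendsto (fun k => polyEval d N (c k) (y k)) l (𝓝 (polyEval d N c₀ y₀)) := by
  refine tendsto_finsetSum _ fun i _ => ?_
  exact (tendsto_pi_nhds.mp hc i).mul
    (((polyFunctions_growth (Module.finBasis ℂ (polyFunctions d N) i).2).1.tendsto y₀).comp hy)

theorem continuous_polyEval (c : Fin (Module.finrank ℂ (polyFunctions d N)) → ℂ) :
    Continuous (polyEval d N c) :=
  continuous_iff_continuousAt.mpr fun _ => tendsto_polyEval tendsto_const_nhds tendsto_id

theorem exists_norm_polyEval_le (d N : ℕ) : ∃ C : ℝ, 0 ≤ C ∧ ∀ c y,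
    ‖polyEval d N c y‖ ≤ C * ‖c‖ * (1 + ‖y‖) ^ N := by
  choose _ C hC hCy using fun i =>
    polyFunctions_growth (Module.finBasis ℂ (polyFunctions d N) i).2
  refine ⟨∑ i, C i, Finset.sum_nonneg fun i _ => hC i, fun c y => ?_⟩
  rw [Finset.sum_mul, Finset.sum_mul]
  refine norm_sum_le_of_le _ fun i _ => ?_
  rw [norm_mul, mul_comm (C i), mul_assoc]
  exact mul_le_mul (norm_le_pi_norm c i) (hCy i y) (norm_nonneg _) (norm_nonneg _)

end polyEval

theorem gaussWeight_pos {d : ℕ} (y : Fin d → ℝ) : 0 < gaussWeight y := Real.exp_pos _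

theorem continuous_gaussWeight (d : ℕ) : Continuous (gaussWeight (d := d)) := by
  unfold gaussWeight
  fun_prop

theorem exists_pow_mul_gaussWeight_le (d m : ℕ) :
    ∃ C : ℝ, 0 ≤ C ∧ ∀ y : Fin d → ℝ, (1 + ‖y‖) ^ m * gaussWeight y ≤ C := by
  refine ⟨m.factorial * Real.exp (3 / 2), by positivity, fun y => ?_⟩
  have h1 : ‖y‖ ^ 2 ≤ ∑ i, y i ^ 2 := by
    have hle : ‖y‖ ≤ Real.sqrt (∑ i, y i ^ 2) := by
      refine (pi_norm_le_iff_of_nonneg (Real.sqrt_nonneg _)).mpr fun i => ?_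
      refine Real.le_sqrt_of_sq_le ?_
      rw [Real.norm_eq_abs, sq_abs]
      exact Finset.single_le_sum (f := fun i => y i ^ 2) (fun j _ => sq_nonneg _)
        (Finset.mem_univ i)
    calc ‖y‖ ^ 2 ≤ Real.sqrt (∑ i, y i ^ 2) ^ 2 := by gcongr
      _ = _ := Real.sq_sqrt (Finset.sum_nonneg fun i _ => sq_nonneg _)
  have h2 : gaussWeight y ≤ Real.exp (3 / 2) * Real.exp (-(1 + ‖y‖)) := by
    rw [gaussWeight, ← Real.exp_add]
    refine Real.exp_le_exp.mpr ?_
    nlinarith [sq_nonneg (‖y‖ - 1)]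
  have h3 : (1 + ‖y‖) ^ m ≤ m.factorial * Real.exp (1 + ‖y‖) := by
    have := Real.pow_div_factorial_le_exp (1 + ‖y‖) (by positivity) m
    rwa [div_le_iff₀' (by positivity)] at this
  calc (1 + ‖y‖) ^ m * gaussWeight y
      ≤ (m.factorial * Real.exp (1 + ‖y‖)) * (Real.exp (3 / 2) * Real.exp (-(1 + ‖y‖))) :=
        mul_le_mul h3 h2 (gaussWeight_pos y).le (by positivity)
    _ = m.factorial * Real.exp (3 / 2) * (Real.exp (1 + ‖y‖) * Real.exp (-(1 + ‖y‖))) := by ring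
    _ = m.factorial * Real.exp (3 / 2) := by rw [← Real.exp_add]; simp

theorem exists_norm_polyEval_mul_gaussWeight_le (d N m : ℕ) : ∃ C : ℝ, 0 ≤ C ∧ ∀ c y,
    ‖polyEval d N c y * gaussWeight y‖ ≤ C * ‖c‖ * ((1 + ‖y‖) ^ m)⁻¹ := by
  obtain ⟨C, hC, hCy⟩ := exists_norm_polyEval_le d N
  obtain ⟨D, hD, hDy⟩ := exists_pow_mul_gaussWeight_le d (N + m)
  refine ⟨C * D, by positivity, fun c y => ?_⟩
  have hpos : 0 < (1 + ‖y‖) ^ m := by positivity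
  rw [← div_eq_mul_inv, le_div_iff₀ hpos, norm_mul, Complex.norm_real, Real.norm_eq_abs,
    abs_of_pos (gaussWeight_pos y)]
  calc ‖polyEval d N c y‖ * gaussWeight y * (1 + ‖y‖) ^ m
      ≤ (C * ‖c‖ * (1 + ‖y‖) ^ N) * gaussWeight y * (1 + ‖y‖) ^ m := by
        have := gaussWeight_pos y
        gcongr
        exact hCy c y
    _ = C * ‖c‖ * ((1 + ‖y‖) ^ (N + m) * gaussWeight y) := by ring
    _ ≤ C * ‖c‖ * D := by gcongr; exact hDy y
    _ = C * D * ‖c‖ := by ring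

theorem memLp_inv_one_add_norm_pow (d : ℕ) {s : ℝ≥0∞} (hs : 1 ≤ s) :
    MemLp (fun y : Fin d → ℝ => ((1 + ‖y‖) ^ (d + 1))⁻¹) s := by
  have hcont : Continuous fun y : Fin d → ℝ => ((1 + ‖y‖) ^ (d + 1))⁻¹ :=
    Continuous.inv₀ (by fun_prop) fun y => by positivity
  have hle : ∀ y : Fin d → ℝ, ((1 + ‖y‖) ^ (d + 1))⁻¹ ≤ 1 := fun y =>
    inv_le_one_of_one_le₀ (one_le_pow₀ (by linarith [norm_nonneg y]))
  rcases eq_or_ne s ∞ with rfl | hs'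
  · refine memLp_top_of_bound hcont.aestronglyMeasurable 1 (Eventually.of_forall fun y => ?_)
    rw [Real.norm_of_nonneg (by positivity)]
    exact hle y
  · have hInt : Integrable fun y : Fin d → ℝ => ((1 + ‖y‖) ^ (d + 1))⁻¹ := by
      have := integrable_one_add_norm (E := Fin d → ℝ) (μ := volume) (r := (d + 1 : ℕ))
        (by simp)
      refine this.congr (Eventually.of_forall fun y => ?_)
      simp only
      rw [Real.rpow_neg (by positivity), Real.rpow_natCast]
    rw [← integrable_norm_rpow_iff hcont.aestronglyMeasurable (by positivity) hs']
    refine hInt.mono' (hcont.norm.rpow_const fun _ => Or.inr ENNReal.toReal_nonneg).aestronglyMeasurable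
      (Eventually.of_forall fun y => ?_)
    rw [Real.norm_of_nonneg (by positivity), Real.norm_of_nonneg (by positivity)]
    refine Real.rpow_le_self_of_le_one (by positivity) (hle y) ?_
    exact (ENNReal.toReal_one ▸ ENNReal.toReal_mono hs' hs)

theorem continuous_polyEval_mul_gaussWeight {d N : ℕ}
    (c : Fin (Module.finrank ℂ (polyFunctions d N)) → ℂ) :
    Continuous fun y => polyEval d N c y * gaussWeight y :=
  (continuous_polyEval c).mul (Complex.continuous_ofReal.comp (continuous_gaussWeight d))

theorem memLp_polyEval_mul_gaussWeight {d N : ℕ}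
    (c : Fin (Module.finrank ℂ (polyFunctions d N)) → ℂ) {s : ℝ≥0∞} (hs : 1 ≤ s) :
    MemLp (fun y => polyEval d N c y * gaussWeight y) s := by
  obtain ⟨C, hC, hCy⟩ := exists_norm_polyEval_mul_gaussWeight_le d N (d + 1)
  refine ((memLp_inv_one_add_norm_pow d hs).const_mul (C * ‖c‖)).mono'
    (continuous_polyEval_mul_gaussWeight c).aestronglyMeasurable
    (Eventually.of_forall fun y => hCy c y)

theorem exists_norm_le_eLpNorm_polyEval (d N : ℕ) {r : ℝ≥0∞} (hr : 1 ≤ r) :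
    ∃ K : ℝ, 0 ≤ K ∧ ∀ c,
      ‖c‖ ≤ K * (eLpNorm (fun y => polyEval d N c y * gaussWeight y) r volume).toReal := by
  have : Fact (1 ≤ r) := ⟨hr⟩
  let T : (Fin (Module.finrank ℂ (polyFunctions d N)) → ℂ) →ₗ[ℂ]
      Lp ℂ r (volume : Measure (Fin d → ℝ)) :=
    { toFun := fun c => (memLp_polyEval_mul_gaussWeight c hr).toLp _
      map_add' := fun c c' => by
        rw [← MemLp.toLp_add]
        congr 1
        funext y
        simp [polyEval_add, add_mul]
      map_smul' := fun a c => by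
        rw [RingHom.id_apply, ← MemLp.toLp_const_smul]
        congr 1
        funext y
        simp [polyEval_smul, mul_assoc] }
  have hker : LinearMap.ker T = ⊥ := by
    refine LinearMap.ker_eq_bot'.mpr fun c hc => ?_
    have h1 : (fun y => polyEval d N c y * gaussWeight y) =ᵐ[volume] fun _ => 0 :=
      ((memLp_polyEval_mul_gaussWeight c hr).toLp_eq_toLp_iff MemLp.zero').mp
        (hc.trans (MemLp.toLp_zero _).symm)
    have h2 := (Continuous.ae_eq_iff_eq volume (continuous_polyEval_mul_gaussWeight c)
      continuous_const).mp h1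
    refine eq_zero_of_polyEval_eq_zero fun y => ?_
    have h3 := congrFun h2 y
    have h4 : (gaussWeight y : ℂ) ≠ 0 := by exact_mod_cast (gaussWeight_pos y).ne'
    exact (mul_eq_zero.mp h3).resolve_right h4
  obtain ⟨K, -, hK⟩ := T.exists_antilipschitzWith hker
  refine ⟨K, K.2, fun c => ?_⟩
  have := hK.le_mul_norm (map_zero T) c
  rwa [show T c = (memLp_polyEval_mul_gaussWeight c hr).toLp _ from rfl, Lp.norm_toLp] at this

theorem tendsto_eLpNorm_restrict_of_eventually_notMem {α E : Type*} [MeasurableSpace α]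
    [NormedAddCommGroup E] {μ : Measure α} {r : ℝ≥0∞} (hr0 : r ≠ 0) (hr_top : r ≠ ∞) {H : α → E}
    (hH : MemLp H r μ) {A : ℕ → Set α} (hA : ∀ k, MeasurableSet (A k))
    (h : ∀ᵐ y ∂μ, ∀ᶠ k in atTop, y ∉ A k) :
    Tendsto (fun k => eLpNorm H r (μ.restrict (A k))) atTop (𝓝 0) := by
  have hpos : 0 < r.toReal := ENNReal.toReal_pos hr0 hr_top
  have hlim : Tendsto (fun k => ∫⁻ y, (A k).indicator (fun y => ‖H y‖ₑ ^ r.toReal) y ∂μ) atTop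
      (𝓝 (∫⁻ _, 0 ∂μ)) := by
    refine tendsto_lintegral_of_dominated_convergence' (fun y => ‖H y‖ₑ ^ r.toReal)
      (fun k => ((hH.1.enorm.pow_const _).indicator (hA k)))
      (fun k => Eventually.of_forall fun y => Set.indicator_le_self _ _ y)
      (lintegral_rpow_enorm_lt_top_of_eLpNorm_lt_top hr0 hr_top hH.2).ne ?_
    filter_upwards [h] with y hy
    refine tendsto_const_nhds.congr' ?_
    filter_upwards [hy] with k hk
    rw [Set.indicator_of_notMem hk]
  rw [lintegral_zero] at hlim
  have h2 := hlim.ennrpow_const (1 / r.toReal)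
  rw [ENNReal.zero_rpow_of_pos (by positivity)] at h2
  refine h2.congr fun k => ?_
  rw [eLpNorm_eq_lintegral_rpow_enorm_toReal hr0 hr_top, lintegral_indicator (hA k)]

/-- Change of variables `x = M y + q` in an `L^r` norm over a set. -/
theorem eLpNorm_restrict_eq_comp_affine {d : ℕ} {M : (Fin d → ℝ) →L[ℝ] (Fin d → ℝ)}
    (hM : M.det ≠ 0) (q : Fin d → ℝ) {r : ℝ≥0∞} (hr_top : r ≠ ∞) (f : (Fin d → ℝ) → ℂ)
    (K : Set (Fin d → ℝ)) :
    eLpNorm f r (volume.restrict K) = ENNReal.ofReal (|M.det| ^ (1 / r).toReal) *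
      eLpNorm (fun y => f (M y + q)) r (volume.restrict {y | M y + q ∈ K}) := by
  have hemb : MeasurableEmbedding fun y => M y + q := by
    have h1 : MeasurableEmbedding M :=
      (ContinuousLinearMap.toContinuousLinearEquivOfDetNeZero M hM).toHomeomorph.measurableEmbedding
    exact (measurableEmbedding_addRight q).comp h1
  have hvol : (volume : Measure (Fin d → ℝ)) =
      ENNReal.ofReal |M.det| • Measure.map (fun y => M y + q) volume := by
    have h1 : Measure.map (fun y => M y + q) volume = ENNReal.ofReal |M.det⁻¹| •
        (volume : Measure (Fin d → ℝ)) := by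
      have h2 := Measure.map_linearMap_addHaar_eq_smul_addHaar
        (volume : Measure (Fin d → ℝ)) (f := M.toLinearMap) hM
      have h3 : Measure.map (fun y => M y + q) volume =
          Measure.map (fun y => y + q) (Measure.map M (volume : Measure (Fin d → ℝ))) :=
        (Measure.map_map (measurable_add_const q) M.continuous.measurable).symm
      rw [h3]
      erw [h2]
      rw [Measure.map_smul, map_add_right_eq_self]
    rw [h1, smul_smul, ← ENNReal.ofReal_mul (abs_nonneg _), ← abs_mul, mul_inv_cancel₀ hM]
    simp
  conv_lhs => rw [hvol]
  rw [Measure.restrict_smul, hemb.restrict_map, eLpNorm_smul_measure_of_ne_top hr_top,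
    hemb.eLpNorm_map_measure, ENNReal.ofReal_rpow_of_nonneg (abs_nonneg _) ENNReal.toReal_nonneg]
  rfl

theorem det_ne_zero_of_mul_eq_one {d : ℕ} {S M : (Fin d → ℝ) →L[ℝ] (Fin d → ℝ)}
    (hSM : S * M = 1) : M.det ≠ 0 := by
  intro h
  have h1 : LinearMap.det (S.toLinearMap ∘ₗ M.toLinearMap) = 1 := by
    have : S.toLinearMap ∘ₗ M.toLinearMap = LinearMap.id :=
      LinearMap.ext fun x => DFunLike.congr_fun hSM x
    rw [this, LinearMap.det_id]
  rw [LinearMap.det_comp, show LinearMap.det M.toLinearMap = 0 from h, mul_zero] at h1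
  exact zero_ne_one h1

/-- The general polynomial Gaussian wave packet, in normalized coordinates. -/
noncomputable def packet (d N : ℕ) (c : Fin (Module.finrank ℂ (polyFunctions d N)) → ℂ)
    (S : (Fin d → ℝ) →L[ℝ] (Fin d → ℝ)) (q : Fin d → ℝ)
    (β : (Fin d → ℝ) →L[ℝ] (Fin d → ℝ) →L[ℝ] ℝ) (ℓ : (Fin d → ℝ) →L[ℝ] ℝ)
    (x : Fin d → ℝ) : ℂ :=
  polyEval d N c (S (x - q)) * gaussWeight (S (x - q)) * quadPhase β ℓ x

theorem continuous_packet {d N : ℕ} (c : Fin (Module.finrank ℂ (polyFunctions d N)) → ℂ)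
    (S : (Fin d → ℝ) →L[ℝ] (Fin d → ℝ)) (q : Fin d → ℝ)
    (β : (Fin d → ℝ) →L[ℝ] (Fin d → ℝ) →L[ℝ] ℝ) (ℓ : (Fin d → ℝ) →L[ℝ] ℝ) :
    Continuous (packet d N c S q β ℓ) :=
  ((continuous_polyEval_mul_gaussWeight c).comp
    (S.continuous.comp (continuous_id.sub continuous_const))).mul (continuous_quadPhase_apply β ℓ)

theorem eLpNorm_packet_restrict {d N : ℕ}
    (c : Fin (Module.finrank ℂ (polyFunctions d N)) → ℂ)
    {S M : (Fin d → ℝ) →L[ℝ] (Fin d → ℝ)} (hSM : S * M = 1) (q : Fin d → ℝ)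
    (β : (Fin d → ℝ) →L[ℝ] (Fin d → ℝ) →L[ℝ] ℝ) (ℓ : (Fin d → ℝ) →L[ℝ] ℝ)
    {r : ℝ≥0∞} (hr_top : r ≠ ∞) (K : Set (Fin d → ℝ)) :
    eLpNorm (packet d N c S q β ℓ) r (volume.restrict K) =
      eLpNorm (fun y => polyEval d N (((|M.det| ^ (1 / r).toReal : ℝ) : ℂ) • c) y * gaussWeight y)
        r (volume.restrict {y | M y + q ∈ K}) := by
  have hSM' : ∀ y, S (M y) = y := fun y => DFunLike.congr_fun hSM y
  rw [eLpNorm_restrict_eq_comp_affine (det_ne_zero_of_mul_eq_one hSM) q hr_top]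
  have h1 : ENNReal.ofReal (|M.det| ^ (1 / r).toReal) =
      ‖((|M.det| ^ (1 / r).toReal : ℝ) : ℂ)‖ₑ := by
    rw [← ofReal_norm, Complex.norm_real, Real.norm_of_nonneg (by positivity)]
  rw [h1, ← eLpNorm_const_smul]
  refine eLpNorm_congr_norm_ae (Eventually.of_forall fun y => ?_)
  simp only [Pi.smul_apply, packet, add_sub_cancel_right, hSM', polyEval_smul, smul_eq_mul,
    norm_mul, norm_quadPhase, mul_one, mul_assoc]

theorem tendsto_eLpNorm_packet_restrict_zero {d N : ℕ}
    {c : ℕ → Fin (Module.finrank ℂ (polyFunctions d N)) → ℂ}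
    {S M : ℕ → (Fin d → ℝ) →L[ℝ] (Fin d → ℝ)} (hSM : ∀ k, S k * M k = 1) (q : ℕ → Fin d → ℝ)
    (β : ℕ → (Fin d → ℝ) →L[ℝ] (Fin d → ℝ) →L[ℝ] ℝ) (ℓ : ℕ → (Fin d → ℝ) →L[ℝ] ℝ)
    {r : ℝ≥0∞} (hr : 1 ≤ r) (hr_top : r ≠ ∞) {R : ℝ}
    (hc : ∀ k, ‖((|(M k).det| ^ (1 / r).toReal : ℝ) : ℂ) • c k‖ ≤ R)
    {K : Set (Fin d → ℝ)} (hK : MeasurableSet K)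
    (h : ∀ᵐ y : Fin d → ℝ, ∀ᶠ k in atTop, M k y + q k ∉ K) :
    Tendsto (fun k => eLpNorm (packet d N (c k) (S k) (q k) (β k) (ℓ k)) r (volume.restrict K))
      atTop (𝓝 0) := by
  obtain ⟨C, hC, hCy⟩ := exists_norm_polyEval_mul_gaussWeight_le d N (d + 1)
  have h1 := tendsto_eLpNorm_restrict_of_eventually_notMem (by positivity) hr_top
    ((memLp_inv_one_add_norm_pow d hr).const_mul (C * R))
    (A := fun k => {y | M k y + q k ∈ K})
    (fun k => (((M k).continuous.add continuous_const).measurable hK)) h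
  refine tendsto_of_tendsto_of_tendsto_of_le_of_le tendsto_const_nhds h1 (fun k => zero_le)
    fun k => ?_
  simp only
  rw [eLpNorm_packet_restrict (c k) (hSM k) (q k) (β k) (ℓ k) hr_top]
  refine eLpNorm_mono_real fun y => (hCy _ y).trans ?_
  gcongr
  exact hc k

/-- If the bulk of each packet leaves every compact subset of an open set `U`, the
distributional limit vanishes on `U`. -/
theorem ae_eq_zero_on_of_escape {d N : ℕ}
    {c : ℕ → Fin (Module.finrank ℂ (polyFunctions d N)) → ℂ}
    {S M : ℕ → (Fin d → ℝ) →L[ℝ] (Fin d → ℝ)} (hSM : ∀ k, S k * M k = 1) (q : ℕ → Fin d → ℝ)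
    (β : ℕ → (Fin d → ℝ) →L[ℝ] (Fin d → ℝ) →L[ℝ] ℝ) (ℓ : ℕ → (Fin d → ℝ) →L[ℝ] ℝ)
    {r : ℝ≥0∞} (hr : 1 ≤ r) (hr_top : r ≠ ∞) {R : ℝ}
    (hc : ∀ k, ‖((|(M k).det| ^ (1 / r).toReal : ℝ) : ℂ) • c k‖ ≤ R)
    {g' : (Fin d → ℝ) → ℂ} (hloc : LocallyIntegrable g' volume)
    (hdistrib : ∀ φ : (Fin d → ℝ) → ℂ, ContDiff ℝ (⊤ : ℕ∞) φ → HasCompactSupport φ →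
      Tendsto (fun k => ∫ x, packet d N (c k) (S k) (q k) (β k) (ℓ k) x * φ x) atTop
        (𝓝 (∫ x, g' x * φ x)))
    {U : Set (Fin d → ℝ)} (hU : IsOpen U)
    (h : ∀ K, IsCompact K → K ⊆ U → ∀ᵐ y : Fin d → ℝ, ∀ᶠ k in atTop, M k y + q k ∉ K) :
    ∀ᵐ x, x ∈ U → g' x = 0 := by
  refine hU.ae_eq_zero_of_integral_contDiff_smul_eq_zero (hloc.locallyIntegrableOn U)
    fun φ hφ hφc hφU => ?_
  have hlim := hdistrib (fun x => (φ x : ℂ)) (Complex.ofRealCLM.contDiff.comp hφ)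
    (hφc.comp_left Complex.ofReal_zero)
  have hKc : IsCompact (tsupport φ) := hφc
  have hL := tendsto_eLpNorm_packet_restrict_zero hSM q β ℓ hr hr_top hc hKc.measurableSet
    (h _ hKc hφU)
  obtain ⟨B, hB⟩ := hφc.exists_bound_of_continuous hφ.continuous
  have hB0 : 0 ≤ B := (norm_nonneg _).trans (hB 0)
  have hzero : Tendsto (fun k => ∫ x, packet d N (c k) (S k) (q k) (β k) (ℓ k) x * (φ x : ℂ))
      atTop (𝓝 0) := by
    rw [tendsto_zero_iff_enorm_tendsto_zero]
    have hfin : volume (tsupport φ) ^ (1 / (1 : ℝ≥0∞).toReal - 1 / r.toReal) ≠ ∞ := by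
      refine ENNReal.rpow_ne_top_of_nonneg ?_ hKc.measure_lt_top.ne
      have hr1 : 1 ≤ r.toReal := ENNReal.toReal_one ▸ ENNReal.toReal_mono hr_top hr
      rw [ENNReal.toReal_one, div_one, sub_nonneg]
      exact div_le_one_of_le₀ hr1 (by positivity)
    have h1 := ENNReal.Tendsto.mul_const (b := ENNReal.ofReal B * volume (tsupport φ) ^
      (1 / (1 : ℝ≥0∞).toReal - 1 / r.toReal)) hL
      (Or.inr (ENNReal.mul_ne_top ENNReal.ofReal_ne_top hfin))
    rw [zero_mul] at h1
    refine tendsto_of_tendsto_of_tendsto_of_le_of_le tendsto_const_nhds h1 (fun k => zero_le)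
      fun k => ?_
    set f := packet d N (c k) (S k) (q k) (β k) (ℓ k) with hf
    have hfc : Continuous f := continuous_packet _ _ _ _ _
    have h2 := eLpNorm_le_eLpNorm_mul_rpow_measure_univ hr
      (hfc.aestronglyMeasurable (μ := volume.restrict (tsupport φ)))
    rw [Measure.restrict_apply_univ, eLpNorm_one_eq_lintegral_enorm] at h2
    have h3 : ∫ x, f x * (φ x : ℂ) = ∫ x in tsupport φ, f x * (φ x : ℂ) := by
      refine (setIntegral_eq_integral_of_forall_compl_eq_zero fun x hx => ?_).symm
      rw [image_eq_zero_of_notMem_tsupport hx]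
      simp
    calc ‖∫ x, f x * (φ x : ℂ)‖ₑ ≤ ∫⁻ x in tsupport φ, ‖f x * (φ x : ℂ)‖ₑ := by
          rw [h3]
          exact enorm_integral_le_lintegral_enorm _
      _ ≤ ∫⁻ x in tsupport φ, ENNReal.ofReal B * ‖f x‖ₑ := by
          refine lintegral_mono fun x => ?_
          rw [enorm_mul, mul_comm]
          gcongr
          rw [← ofReal_norm, Complex.norm_real]
          exact ENNReal.ofReal_le_ofReal (hB x)
      _ = ENNReal.ofReal B * ∫⁻ x in tsupport φ, ‖f x‖ₑ := lintegral_const_mul' _ _ (by simp)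
      _ ≤ ENNReal.ofReal B * (eLpNorm f r (volume.restrict (tsupport φ)) *
          volume (tsupport φ) ^ (1 / (1 : ℝ≥0∞).toReal - 1 / r.toReal)) := by gcongr
      _ = _ := by ring
  have h4 := tendsto_nhds_unique hlim hzero
  rw [← h4]
  refine integral_congr_ae (Eventually.of_forall fun x => ?_)
  simp [mul_comm]

theorem exists_norm_scaled_coeff_le (d N : ℕ) {r : ℝ≥0∞} (hr : 1 ≤ r) (hr_top : r ≠ ∞) {C : ℝ≥0∞}
    (hC : C < ∞) :
    ∃ R : ℝ, ∀ (c : Fin (Module.finrank ℂ (polyFunctions d N)) → ℂ)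
      (S M : (Fin d → ℝ) →L[ℝ] (Fin d → ℝ)) (q : Fin d → ℝ)
      (β : (Fin d → ℝ) →L[ℝ] (Fin d → ℝ) →L[ℝ] ℝ) (ℓ : (Fin d → ℝ) →L[ℝ] ℝ), S * M = 1 →
      eLpNorm (packet d N c S q β ℓ) r volume ≤ C →
      ‖((|M.det| ^ (1 / r).toReal : ℝ) : ℂ) • c‖ ≤ R := by
  obtain ⟨K, hK, hKc⟩ := exists_norm_le_eLpNorm_polyEval d N hr
  refine ⟨K * C.toReal, fun c S M q β ℓ hSM hle => (hKc _).trans ?_⟩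
  have h1 := eLpNorm_packet_restrict c hSM q β ℓ hr_top Set.univ
  simp only [Set.mem_univ, Set.ofPred_true, Measure.restrict_univ] at h1
  rw [← h1]
  gcongr
  exact hC.ne

theorem ae_affine_ne_zero {d : ℕ} {M : (Fin d → ℝ) →L[ℝ] (Fin d → ℝ)} {q : Fin d → ℝ}
    (h : (M, q) ≠ 0) : ∀ᵐ y, M y + q ≠ 0 := by
  by_cases hM : M = 0
  · subst hM
    refine Eventually.of_forall fun y hy => h ?_
    simpa using hy
  by_cases hy₀ : ∃ y₀, M y₀ + q = 0
  · obtain ⟨y₀, hy₀⟩ := hy₀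
    have hker : M.toLinearMap.ker ≠ ⊤ := fun hk =>
      hM (ContinuousLinearMap.coe_injective (LinearMap.ker_eq_top.mp hk))
    have hnull := Measure.addHaar_submodule volume _ hker
    rw [← measure_preimage_add_right volume (-y₀)] at hnull
    refine measure_mono_null (fun y hy => ?_) hnull
    have hy' : M y + q = 0 := not_not.mp hy
    change M (y + -y₀) = 0
    rw [map_add, map_neg, ← sub_eq_add_neg, sub_eq_zero]
    exact add_right_cancel (hy'.trans hy₀.symm)
  · exact Eventually.of_forall fun y hy => hy₀ ⟨y, hy⟩

theorem ae_eventually_notMem_of_norm_atTop {d : ℕ} {M : ℕ → (Fin d → ℝ) →L[ℝ] (Fin d → ℝ)}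
    {q : ℕ → Fin d → ℝ} (hnorm : Tendsto (fun k => ‖(M k, q k)‖) atTop atTop)
    {a : ((Fin d → ℝ) →L[ℝ] (Fin d → ℝ)) × (Fin d → ℝ)} (ha : a ≠ 0)
    (hlim : Tendsto (fun k => ‖(M k, q k)‖⁻¹ • (M k, q k)) atTop (𝓝 a))
    {K : Set (Fin d → ℝ)} (hK : IsCompact K) :
    ∀ᵐ y : Fin d → ℝ, ∀ᶠ k in atTop, M k y + q k ∉ K := by
  filter_upwards [ae_affine_ne_zero (M := a.1) (q := a.2) ha] with y hy
  have h1 : Tendsto (fun k => ‖(M k, q k)‖⁻¹ • (M k y + q k)) atTop (𝓝 (a.1 y + a.2)) := by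
    refine ((tendsto_clm_apply ((continuous_fst.tendsto a).comp hlim) tendsto_const_nhds).add
      ((continuous_snd.tendsto a).comp hlim)).congr fun k => ?_
    simp [smul_add]
  have h2 : Tendsto (fun k => ‖M k y + q k‖) atTop atTop := by
    refine (hnorm.atTop_mul_pos (norm_pos_iff.mpr hy) h1.norm).congr' ?_
    filter_upwards [hnorm.eventually_gt_atTop 0] with k hk
    rw [norm_smul, norm_inv, norm_norm, mul_inv_cancel_left₀ hk.ne']
  obtain ⟨B, hB⟩ := hK.isBounded.exists_norm_le
  filter_upwards [h2.eventually_gt_atTop B] with k hk hmem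
  exact (hB _ hmem).not_gt hk

theorem det_ne_zero_of_tendsto {d N : ℕ}
    {c : ℕ → Fin (Module.finrank ℂ (polyFunctions d N)) → ℂ}
    {S M : ℕ → (Fin d → ℝ) →L[ℝ] (Fin d → ℝ)} (hSM : ∀ k, S k * M k = 1) {q : ℕ → Fin d → ℝ}
    (β : ℕ → (Fin d → ℝ) →L[ℝ] (Fin d → ℝ) →L[ℝ] ℝ) (ℓ : ℕ → (Fin d → ℝ) →L[ℝ] ℝ)
    {r : ℝ≥0∞} (hr : 1 ≤ r) (hr_top : r ≠ ∞) {R : ℝ}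
    (hc : ∀ k, ‖((|(M k).det| ^ (1 / r).toReal : ℝ) : ℂ) • c k‖ ≤ R)
    {g' : (Fin d → ℝ) → ℂ} (hloc : LocallyIntegrable g' volume) (hg' : ¬ g' =ᵐ[volume] 0)
    (hdistrib : ∀ φ : (Fin d → ℝ) → ℂ, ContDiff ℝ (⊤ : ℕ∞) φ → HasCompactSupport φ →
      Tendsto (fun k => ∫ x, packet d N (c k) (S k) (q k) (β k) (ℓ k) x * φ x) atTop
        (𝓝 (∫ x, g' x * φ x)))
    {M₀ : (Fin d → ℝ) →L[ℝ] (Fin d → ℝ)} {q₀ : Fin d → ℝ} (hM : Tendsto M atTop (𝓝 M₀))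
    (hq : Tendsto q atTop (𝓝 q₀)) : M₀.det ≠ 0 := by
  intro hdet
  have hrange : M₀.toLinearMap.range ≠ ⊤ := fun h =>
    (LinearMap.range_lt_top_of_det_eq_zero (f := M₀.toLinearMap) hdet).ne h
  let H : Set (Fin d → ℝ) := (fun x => x + -q₀) ⁻¹' (M₀.toLinearMap.range : Set (Fin d → ℝ))
  have hnull : volume H = 0 := by
    rw [measure_preimage_add_right]
    exact Measure.addHaar_submodule volume _ hrange
  have hclosed : IsClosed H :=
    (Submodule.closed_of_finiteDimensional _).preimage (continuous_id.add continuous_const)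
  have hzero := ae_eq_zero_on_of_escape hSM q β ℓ hr hr_top hc hloc hdistrib hclosed.isOpen_compl
    fun K hK hKH => Eventually.of_forall fun y => by
      have hy : M₀ y + q₀ ∉ K := fun hmem => hKH hmem ⟨y, by simp⟩
      exact ((tendsto_clm_apply hM tendsto_const_nhds).add hq).eventually
        (hK.isClosed.isOpen_compl.mem_nhds hy)
  refine hg' ?_
  filter_upwards [hzero, measure_eq_zero_iff_ae_notMem.mp hnull] with x hx hxH
  exact hx hxH

theorem exists_subseq_affine_tendsto {d N : ℕ}
    {c : ℕ → Fin (Module.finrank ℂ (polyFunctions d N)) → ℂ}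
    {S M : ℕ → (Fin d → ℝ) →L[ℝ] (Fin d → ℝ)} (hSM : ∀ k, S k * M k = 1) {q : ℕ → Fin d → ℝ}
    (β : ℕ → (Fin d → ℝ) →L[ℝ] (Fin d → ℝ) →L[ℝ] ℝ) (ℓ : ℕ → (Fin d → ℝ) →L[ℝ] ℝ)
    {r : ℝ≥0∞} (hr : 1 ≤ r) (hr_top : r ≠ ∞) {R : ℝ}
    (hc : ∀ k, ‖((|(M k).det| ^ (1 / r).toReal : ℝ) : ℂ) • c k‖ ≤ R)
    {g' : (Fin d → ℝ) → ℂ} (hloc : LocallyIntegrable g' volume) (hg' : ¬ g' =ᵐ[volume] 0)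
    (hdistrib : ∀ φ : (Fin d → ℝ) → ℂ, ContDiff ℝ (⊤ : ℕ∞) φ → HasCompactSupport φ →
      Tendsto (fun k => ∫ x, packet d N (c k) (S k) (q k) (β k) (ℓ k) x * φ x) atTop
        (𝓝 (∫ x, g' x * φ x))) :
    ∃ (φ : ℕ → ℕ) (M₀ : (Fin d → ℝ) →L[ℝ] (Fin d → ℝ)) (q₀ : Fin d → ℝ), StrictMono φ ∧
      Tendsto (fun k => M (φ k)) atTop (𝓝 M₀) ∧ Tendsto (fun k => q (φ k)) atTop (𝓝 q₀) := by
  have : ProperSpace (((Fin d → ℝ) →L[ℝ] (Fin d → ℝ)) × (Fin d → ℝ)) :=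
    FiniteDimensional.proper ℝ _
  obtain ⟨φ, hφ, ⟨a, ha⟩ | ⟨hnorm, a, ha, hlim⟩⟩ :=
    exists_subseq_tendsto_or_normalized fun k => (M k, q k)
  · exact ⟨φ, a.1, a.2, hφ, (continuous_fst.tendsto a).comp ha, (continuous_snd.tendsto a).comp ha⟩
  · have hzero := ae_eq_zero_on_of_escape (fun k => hSM (φ k)) (fun k => q (φ k))
      (fun k => β (φ k)) (fun k => ℓ (φ k)) hr hr_top (fun k => hc (φ k)) hloc
      (fun ψ hψ hψc => (hdistrib ψ hψ hψc).comp hφ.tendsto_atTop) isOpen_univ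
      fun K hK _ => ae_eventually_notMem_of_norm_atTop hnorm ha hlim hK
    exact absurd (hzero.mono fun x hx => hx trivial) hg'

theorem tendsto_of_mul_eq_one {d : ℕ} {S M : ℕ → (Fin d → ℝ) →L[ℝ] (Fin d → ℝ)}
    (hSM : ∀ k, S k * M k = 1) (hMS : ∀ k, M k * S k = 1)
    {M₀ : (Fin d → ℝ) →L[ℝ] (Fin d → ℝ)} (hM : Tendsto M atTop (𝓝 M₀)) (hdet : M₀.det ≠ 0) :
    ∃ S₀, M₀ * S₀ = 1 ∧ Tendsto S atTop (𝓝 S₀) := by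
  let e := ContinuousLinearMap.toContinuousLinearEquivOfDetNeZero M₀ hdet
  let u : ((Fin d → ℝ) →L[ℝ] (Fin d → ℝ))ˣ :=
    ⟨M₀, e.symm, ContinuousLinearMap.ext fun x => e.apply_symm_apply x,
      ContinuousLinearMap.ext fun x => e.symm_apply_apply x⟩
  refine ⟨↑u⁻¹, u.mul_inv, ?_⟩
  have h1 := (NormedRing.inverse_continuousAt u).tendsto.comp hM
  rw [Ring.inverse_unit] at h1
  refine h1.congr fun k => ?_
  exact Ring.inverse_unit (⟨M k, S k, hMS k, hSM k⟩ : ((Fin d → ℝ) →L[ℝ] (Fin d → ℝ))ˣ)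

theorem exists_subseq_coeff_tendsto {d n : ℕ} {c : ℕ → Fin n → ℂ}
    {M : ℕ → (Fin d → ℝ) →L[ℝ] (Fin d → ℝ)} {M₀ : (Fin d → ℝ) →L[ℝ] (Fin d → ℝ)}
    (hM : Tendsto M atTop (𝓝 M₀)) (hdet : M₀.det ≠ 0) {p R : ℝ}
    (hc : ∀ k, ‖((|(M k).det| ^ p : ℝ) : ℂ) • c k‖ ≤ R) :
    ∃ (φ : ℕ → ℕ) (c₀ : Fin n → ℂ), StrictMono φ ∧ Tendsto (fun k => c (φ k)) atTop (𝓝 c₀) := by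
  have hpos : 0 < |M₀.det| := abs_pos.mpr hdet
  have h1 : Tendsto (fun k => |(M k).det| ^ p) atTop (𝓝 (|M₀.det| ^ p)) :=
    ((ContinuousLinearMap.continuous_det.tendsto M₀).comp hM).abs.rpow_const (Or.inl hpos.ne')
  have hppos : 0 < |M₀.det| ^ p := Real.rpow_pos_of_pos hpos p
  have h2 : ∀ᶠ k in atTop, ‖c k‖ ≤ R / (|M₀.det| ^ p / 2) := by
    filter_upwards [h1.eventually_const_le (half_lt_self hppos)] with k hk
    rw [le_div_iff₀ (by positivity), mul_comm]
    refine le_trans ?_ (hc k)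
    rw [norm_smul, Complex.norm_real, Real.norm_of_nonneg (by positivity)]
    gcongr
  obtain ⟨c₀, -, φ, hφ, hlim⟩ := tendsto_subseq_of_frequently_bounded
    (Metric.isBounded_closedBall (x := (0 : Fin n → ℂ)) (r := R / (|M₀.det| ^ p / 2)))
    (x := c) (h2.frequently.mono fun k hk => by simpa using hk)
  exact ⟨φ, c₀, hφ, hlim⟩

theorem tendsto_packet {d N : ℕ} {ι : Type*} {l : Filter ι}
    {c : ι → Fin (Module.finrank ℂ (polyFunctions d N)) → ℂ}
    {c₀ : Fin (Module.finrank ℂ (polyFunctions d N)) → ℂ}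
    {S : ι → (Fin d → ℝ) →L[ℝ] (Fin d → ℝ)} {S₀ : (Fin d → ℝ) →L[ℝ] (Fin d → ℝ)}
    {q : ι → Fin d → ℝ} {q₀ : Fin d → ℝ}
    {β : ι → (Fin d → ℝ) →L[ℝ] (Fin d → ℝ) →L[ℝ] ℝ} {β₀ : (Fin d → ℝ) →L[ℝ] (Fin d → ℝ) →L[ℝ] ℝ}
    {ℓ : ι → (Fin d → ℝ) →L[ℝ] ℝ} {ℓ₀ : (Fin d → ℝ) →L[ℝ] ℝ}
    {x : ι → Fin d → ℝ} {x₀ : Fin d → ℝ}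
    (hc : Tendsto c l (𝓝 c₀)) (hS : Tendsto S l (𝓝 S₀)) (hq : Tendsto q l (𝓝 q₀))
    (hβ : Tendsto β l (𝓝 β₀)) (hℓ : Tendsto ℓ l (𝓝 ℓ₀)) (hx : Tendsto x l (𝓝 x₀)) :
    Tendsto (fun k => packet d N (c k) (S k) (q k) (β k) (ℓ k) (x k)) l
      (𝓝 (packet d N c₀ S₀ q₀ β₀ ℓ₀ x₀)) := by
  have hy := tendsto_clm_apply hS (hx.sub hq)
  exact ((tendsto_polyEval hc hy).mul ((Complex.continuous_ofReal.comp
    (continuous_gaussWeight d)).tendsto _ |>.comp hy)).mul (tendsto_quadPhase hβ hℓ hx)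

theorem packet_eq_mul_quadPhase {d N : ℕ} (c : Fin (Module.finrank ℂ (polyFunctions d N)) → ℂ)
    (S : (Fin d → ℝ) →L[ℝ] (Fin d → ℝ)) (q : Fin d → ℝ)
    (β : (Fin d → ℝ) →L[ℝ] (Fin d → ℝ) →L[ℝ] ℝ) (ℓ : (Fin d → ℝ) →L[ℝ] ℝ) (x : Fin d → ℝ) :
    packet d N c S q β ℓ x = packet d N c S q 0 0 x * quadPhase β ℓ x := by
  simp [packet, quadPhase]

/-- If the phases oscillate so fast that they annihilate every integrable function in the limit,
then the packets converge to zero in the sense of distributions. -/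
theorem tendsto_integral_packet_mul_zero {d N : ℕ}
    {c : ℕ → Fin (Module.finrank ℂ (polyFunctions d N)) → ℂ}
    {c₀ : Fin (Module.finrank ℂ (polyFunctions d N)) → ℂ}
    {S : ℕ → (Fin d → ℝ) →L[ℝ] (Fin d → ℝ)} {S₀ : (Fin d → ℝ) →L[ℝ] (Fin d → ℝ)}
    {q : ℕ → Fin d → ℝ} {q₀ : Fin d → ℝ}
    {β : ℕ → (Fin d → ℝ) →L[ℝ] (Fin d → ℝ) →L[ℝ] ℝ} {ℓ : ℕ → (Fin d → ℝ) →L[ℝ] ℝ}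
    (hc : Tendsto c atTop (𝓝 c₀)) (hS : Tendsto S atTop (𝓝 S₀)) (hq : Tendsto q atTop (𝓝 q₀))
    (hosc : ∀ f : (Fin d → ℝ) → ℂ, Integrable f →
      Tendsto (fun k => ∫ x, f x * quadPhase (β k) (ℓ k) x) atTop (𝓝 0))
    {φ : (Fin d → ℝ) → ℂ} (hφ : Integrable φ) :
    Tendsto (fun k => ∫ x, packet d N (c k) (S k) (q k) (β k) (ℓ k) x * φ x) atTop (𝓝 0) := by
  obtain ⟨C, hC, hCy⟩ := exists_norm_polyEval_mul_gaussWeight_le d N 0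
  obtain ⟨R, hR⟩ := (Metric.isBounded_range_of_tendsto c hc).exists_norm_le
  have hbd : ∀ c S q β ℓ x, ‖packet d N c S q β ℓ x‖ ≤ C * ‖c‖ := fun c S q β ℓ x => by
    rw [packet, norm_mul, norm_quadPhase, mul_one]
    simpa using hCy c (S (x - q))
  have hR0 : ∀ k, ‖c k‖ ≤ R := fun k => hR _ ⟨k, rfl⟩
  have hInt : ∀ c S q β ℓ, Integrable fun x => φ x * packet d N c S q β ℓ x := fun c S q β ℓ =>
    hφ.mul_bdd (c := C * ‖c‖) (continuous_packet c S q β ℓ).aestronglyMeasurable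
      (Eventually.of_forall (hbd c S q β ℓ))
  have hmain := hosc _ (hInt c₀ S₀ q₀ 0 0)
  have hdiff : Tendsto (fun k => ∫ x, φ x * (packet d N (c k) (S k) (q k) 0 0 x -
      packet d N c₀ S₀ q₀ 0 0 x) * quadPhase (β k) (ℓ k) x) atTop (𝓝 (∫ _ : Fin d → ℝ, (0 : ℂ))) := by
    refine tendsto_integral_of_dominated_convergence (fun x => ‖φ x‖ * (C * R + C * ‖c₀‖))
      (fun k => ?_) (hφ.norm.mul_const _) (fun k => Eventually.of_forall fun x => ?_)
      (Eventually.of_forall fun x => ?_)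
    · exact (hφ.aestronglyMeasurable.mul ((continuous_packet _ _ _ _ _).sub
        (continuous_packet _ _ _ _ _)).aestronglyMeasurable).mul
        (continuous_quadPhase_apply _ _).aestronglyMeasurable
    · rw [norm_mul, norm_mul, norm_quadPhase, mul_one]
      gcongr
      refine (norm_sub_le _ _).trans (add_le_add ((hbd _ _ _ _ _ _).trans ?_) (hbd _ _ _ _ _ _))
      gcongr
      exact hR0 k
    · rw [tendsto_zero_iff_norm_tendsto_zero]
      have h1 := tendsto_packet (N := N) hc hS hq (tendsto_const_nhds (x := 0))
        (tendsto_const_nhds (x := 0)) (tendsto_const_nhds (x := x))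
      have h2 := ((h1.sub_const (packet d N c₀ S₀ q₀ 0 0 x)).const_mul (φ x)).norm
      rw [sub_self, mul_zero, norm_zero] at h2
      refine h2.congr fun k => ?_
      rw [norm_mul _ (quadPhase _ _ _), norm_quadPhase, mul_one]
  rw [integral_zero] at hdiff
  have hsum := hdiff.add hmain
  rw [add_zero] at hsum
  refine hsum.congr fun k => ?_
  rw [← integral_add]
  · refine integral_congr_ae (Eventually.of_forall fun x => ?_)
    simp only
    rw [packet_eq_mul_quadPhase (c k) (S k) (q k) (β k)]
    ring
  · refine ((hInt (c k) (S k) (q k) (β k) (ℓ k)).sub (hInt c₀ S₀ q₀ (β k) (ℓ k))).congr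
      (Eventually.of_forall fun x => ?_)
    simp only [Pi.sub_apply]
    rw [packet_eq_mul_quadPhase (c k), packet_eq_mul_quadPhase c₀]
    ring
  · refine (hInt c₀ S₀ q₀ (β k) (ℓ k)).congr (Eventually.of_forall fun x => ?_)
    simp only
    rw [packet_eq_mul_quadPhase c₀, mul_assoc]

theorem ae_eq_zero_of_integral_mul_eq_zero {d : ℕ} {f : (Fin d → ℝ) → ℂ}
    (hf : LocallyIntegrable f volume)
    (h : ∀ φ : (Fin d → ℝ) → ℂ, ContDiff ℝ (⊤ : ℕ∞) φ → HasCompactSupport φ →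
      ∫ x, f x * φ x = 0) : f =ᵐ[volume] 0 := by
  refine ae_eq_zero_of_integral_contDiff_smul_eq_zero hf fun φ hφ hφc => ?_
  rw [← h (fun x => (φ x : ℂ)) (Complex.ofRealCLM.contDiff.comp hφ)
    (hφc.comp_left Complex.ofReal_zero)]
  refine integral_congr_ae (Eventually.of_forall fun x => ?_)
  simp [mul_comm]

/-- Nonzero distributional limits force the phases to converge along a subsequence. -/
theorem exists_subseq_phase_tendsto {d N : ℕ}
    {c : ℕ → Fin (Module.finrank ℂ (polyFunctions d N)) → ℂ}
    {c₀ : Fin (Module.finrank ℂ (polyFunctions d N)) → ℂ}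
    {S : ℕ → (Fin d → ℝ) →L[ℝ] (Fin d → ℝ)} {S₀ : (Fin d → ℝ) →L[ℝ] (Fin d → ℝ)}
    {q : ℕ → Fin d → ℝ} {q₀ : Fin d → ℝ}
    {β : ℕ → (Fin d → ℝ) →L[ℝ] (Fin d → ℝ) →L[ℝ] ℝ} (hsymm : ∀ k x y, β k x y = β k y x)
    (ℓ : ℕ → (Fin d → ℝ) →L[ℝ] ℝ)
    (hc : Tendsto c atTop (𝓝 c₀)) (hS : Tendsto S atTop (𝓝 S₀)) (hq : Tendsto q atTop (𝓝 q₀))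
    {g' : (Fin d → ℝ) → ℂ} (hloc : LocallyIntegrable g' volume) (hg' : ¬ g' =ᵐ[volume] 0)
    (hdistrib : ∀ φ : (Fin d → ℝ) → ℂ, ContDiff ℝ (⊤ : ℕ∞) φ → HasCompactSupport φ →
      Tendsto (fun k => ∫ x, packet d N (c k) (S k) (q k) (β k) (ℓ k) x * φ x) atTop
        (𝓝 (∫ x, g' x * φ x))) :
    ∃ (φ : ℕ → ℕ) (β₀ : (Fin d → ℝ) →L[ℝ] (Fin d → ℝ) →L[ℝ] ℝ) (ℓ₀ : (Fin d → ℝ) →L[ℝ] ℝ),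
      StrictMono φ ∧ Tendsto (fun k => β (φ k)) atTop (𝓝 β₀) ∧
      Tendsto (fun k => ℓ (φ k)) atTop (𝓝 ℓ₀) := by
  have hosc : ∀ ψ : ℕ → ℕ, StrictMono ψ → ¬ ∀ f : (Fin d → ℝ) → ℂ, Integrable f →
      Tendsto (fun k => ∫ x, f x * quadPhase (β (ψ k)) (ℓ (ψ k)) x) atTop (𝓝 0) := by
    intro ψ hψ h
    have hψ' := hψ.tendsto_atTop
    refine hg' (ae_eq_zero_of_integral_mul_eq_zero hloc fun φ hφ hφc => ?_)
    exact tendsto_nhds_unique ((hdistrib φ hφ hφc).comp hψ')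
      (tendsto_integral_packet_mul_zero (hc.comp hψ') (hS.comp hψ') (hq.comp hψ') h
        (hφ.continuous.integrable_of_hasCompactSupport hφc))
  have : ProperSpace ((Fin d → ℝ) →L[ℝ] ℝ) := FiniteDimensional.proper ℝ _
  have : ProperSpace ((Fin d → ℝ) →L[ℝ] (Fin d → ℝ) →L[ℝ] ℝ) :=
    FiniteDimensional.proper ℝ ((Fin d → ℝ) →L[ℝ] (Fin d → ℝ) →L[ℝ] ℝ)
  obtain ⟨ψ, hψ, ⟨β₀, hβ⟩ | ⟨hnorm, b, hb, hlim⟩⟩ := exists_subseq_tendsto_or_normalized β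
  · obtain ⟨χ, hχ, ⟨ℓ₀, hℓ⟩ | ⟨hnorm, -⟩⟩ :=
      exists_subseq_tendsto_or_normalized fun k => ℓ (ψ k)
    · exact ⟨fun k => ψ (χ k), β₀, ℓ₀, hψ.comp hχ, hβ.comp hχ.tendsto_atTop, hℓ⟩
    · exact absurd (fun f hf => tendsto_integral_quadPhase_of_linear_atTop hf
        (hβ.comp hχ.tendsto_atTop) hnorm) (hosc _ (hψ.comp hχ))
  · exact absurd (fun f hf => tendsto_integral_quadPhase_of_bilinear_atTop hf
      (fun k => hsymm (ψ k)) hnorm hb hlim fun k => ℓ (ψ k)) (hosc ψ hψ)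

theorem exists_norm_packet_le (d N m : ℕ) : ∃ C : ℝ, 0 ≤ C ∧
    ∀ (c : Fin (Module.finrank ℂ (polyFunctions d N)) → ℂ)
      (S M : (Fin d → ℝ) →L[ℝ] (Fin d → ℝ)) (q : Fin d → ℝ)
      (β : (Fin d → ℝ) →L[ℝ] (Fin d → ℝ) →L[ℝ] ℝ) (ℓ : (Fin d → ℝ) →L[ℝ] ℝ) (B : ℝ),
      M * S = 1 → ‖M‖ ≤ B → ‖q‖ ≤ B → ∀ x,
      ‖packet d N c S q β ℓ x‖ ≤ C * ‖c‖ * (1 + B) ^ m * ((1 + ‖x‖) ^ m)⁻¹ := by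
  obtain ⟨C, hC, hCy⟩ := exists_norm_polyEval_mul_gaussWeight_le d N m
  refine ⟨C, hC, fun c S M q β ℓ B hMS hM hq x => ?_⟩
  rw [packet, norm_mul, norm_quadPhase, mul_one]
  refine (hCy c _).trans ?_
  set y := S (x - q) with hy
  have hB : 0 ≤ B := (norm_nonneg q).trans hq
  have hx : x = M y + q := by
    rw [show M y = x - q from DFunLike.congr_fun hMS (x - q), sub_add_cancel]
  have h1 : 1 + ‖x‖ ≤ (1 + B) * (1 + ‖y‖) := by
    have h2 : ‖x‖ ≤ B * ‖y‖ + B := by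
      conv_lhs => rw [hx]
      exact (norm_add_le _ _).trans (add_le_add (M.le_of_opNorm_le hM y) hq)
    linarith [norm_nonneg y]
  rw [mul_assoc (C * ‖c‖)]
  gcongr
  rw [← div_eq_mul_inv, le_div_iff₀ (by positivity), ← div_eq_inv_mul, div_le_iff₀ (by positivity),
    ← mul_pow]
  gcongr

/-- Convergence of the parameters implies uniform convergence of the packets with a polynomial
weight. -/
theorem eventually_norm_packet_sub_le {d N : ℕ}
    {c : ℕ → Fin (Module.finrank ℂ (polyFunctions d N)) → ℂ}
    {c₀ : Fin (Module.finrank ℂ (polyFunctions d N)) → ℂ}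
    {S M : ℕ → (Fin d → ℝ) →L[ℝ] (Fin d → ℝ)} {S₀ M₀ : (Fin d → ℝ) →L[ℝ] (Fin d → ℝ)}
    {q : ℕ → Fin d → ℝ} {q₀ : Fin d → ℝ}
    {β : ℕ → (Fin d → ℝ) →L[ℝ] (Fin d → ℝ) →L[ℝ] ℝ} {β₀ : (Fin d → ℝ) →L[ℝ] (Fin d → ℝ) →L[ℝ] ℝ}
    {ℓ : ℕ → (Fin d → ℝ) →L[ℝ] ℝ} {ℓ₀ : (Fin d → ℝ) →L[ℝ] ℝ}
    (hMS : ∀ k, M k * S k = 1) (hMS₀ : M₀ * S₀ = 1) (hM : Tendsto M atTop (𝓝 M₀))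
    (hc : Tendsto c atTop (𝓝 c₀)) (hS : Tendsto S atTop (𝓝 S₀)) (hq : Tendsto q atTop (𝓝 q₀))
    (hβ : Tendsto β atTop (𝓝 β₀)) (hℓ : Tendsto ℓ atTop (𝓝 ℓ₀)) (m : ℕ) {ε : ℝ} (hε : 0 < ε) :
    ∀ᶠ k in atTop, ∀ x, ‖packet d N (c k) (S k) (q k) (β k) (ℓ k) x -
      packet d N c₀ S₀ q₀ β₀ ℓ₀ x‖ ≤ ε * ((1 + ‖x‖) ^ m)⁻¹ := by
  obtain ⟨C, hC, hCx⟩ := exists_norm_packet_le d N (m + 1)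
  set B : ℝ := ‖M₀‖ + ‖q₀‖ + 1 with hB
  have hB0 : 0 ≤ B := by positivity
  set D : ℝ := C * (‖c₀‖ + 1) * (1 + B) ^ (m + 1) with hD
  have hD0 : 0 ≤ D := by positivity
  have hlim : ∀ x, ‖packet d N c₀ S₀ q₀ β₀ ℓ₀ x‖ ≤ D * ((1 + ‖x‖) ^ (m + 1))⁻¹ := fun x => by
    refine (hCx c₀ S₀ M₀ q₀ β₀ ℓ₀ B hMS₀ (by linarith [norm_nonneg q₀])
      (by linarith [norm_nonneg M₀]) x).trans ?_
    rw [hD]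
    gcongr
    linarith
  obtain ⟨ρ, hρ0, hρ⟩ : ∃ ρ : ℝ, 0 < ρ ∧ 2 * D ≤ ε * (1 + ρ) := by
    refine ⟨2 * D / ε + 1, by positivity, ?_⟩
    have : ε * (1 + (2 * D / ε + 1)) = 2 * D + 2 * ε := by
      field_simp
      ring
    linarith
  have hunif : TendstoUniformlyOn (fun k => packet d N (c k) (S k) (q k) (β k) (ℓ k))
      (packet d N c₀ S₀ q₀ β₀ ℓ₀) atTop (Metric.closedBall 0 ρ) := by
    rw [← tendstoLocallyUniformlyOn_iff_tendstoUniformlyOn_of_compact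
      (isCompact_closedBall _ _)]
    refine TendstoLocallyUniformly.tendstoLocallyUniformlyOn ?_
    rw [tendstoLocallyUniformly_iff_forall_tendsto]
    intro x
    have hsnd : Tendsto (Prod.snd : ℕ × (Fin d → ℝ) → _) (atTop ×ˢ 𝓝 x) (𝓝 x) := tendsto_snd
    have h1 := tendsto_packet (N := N) (hc.comp tendsto_fst) (hS.comp tendsto_fst)
      (hq.comp tendsto_fst) (hβ.comp tendsto_fst) (hℓ.comp tendsto_fst) hsnd
    have h2 := ((continuous_packet c₀ S₀ q₀ β₀ ℓ₀).tendsto x).comp hsnd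
    exact (h2.prodMk_nhds h1).mono_right (nhds_le_uniformity _)
  have hε' : 0 < ε * ((1 + ρ) ^ m)⁻¹ := by positivity
  filter_upwards [Metric.tendstoUniformlyOn_iff.mp hunif _ hε',
    hM.norm.eventually_le_const (show ‖M₀‖ < B by linarith [norm_nonneg q₀]),
    hq.norm.eventually_le_const (show ‖q₀‖ < B by linarith [norm_nonneg M₀]),
    hc.norm.eventually_le_const (lt_add_one ‖c₀‖)] with k hk hMk hqk hck x
  rcases le_total ‖x‖ ρ with hx | hx
  · have h1 := hk x (by simpa using hx)
    rw [dist_comm, dist_eq_norm] at h1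
    refine h1.le.trans ?_
    gcongr
  · have h1 : ‖packet d N (c k) (S k) (q k) (β k) (ℓ k) x‖ ≤ D * ((1 + ‖x‖) ^ (m + 1))⁻¹ := by
      refine (hCx _ (S k) (M k) (q k) (β k) (ℓ k) B (hMS k) hMk hqk x).trans ?_
      rw [hD]
      gcongr
    calc _ ≤ D * ((1 + ‖x‖) ^ (m + 1))⁻¹ + D * ((1 + ‖x‖) ^ (m + 1))⁻¹ :=
          (norm_sub_le _ _).trans (add_le_add h1 (hlim x))
      _ = 2 * D * ((1 + ‖x‖) ^ (m + 1))⁻¹ := by ring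
      _ ≤ ε * (1 + ‖x‖) * ((1 + ‖x‖) ^ (m + 1))⁻¹ := by
          refine mul_le_mul_of_nonneg_right (hρ.trans ?_) (by positivity)
          gcongr
      _ = ε * ((1 + ‖x‖) ^ m)⁻¹ := by
          field_simp
          ring

theorem tendsto_eLpNorm_of_eventually_norm_le {d : ℕ} {f : ℕ → (Fin d → ℝ) → ℂ}
    (hf : ∀ ε : ℝ, 0 < ε → ∀ᶠ k in atTop, ∀ x, ‖f k x‖ ≤ ε * ((1 + ‖x‖) ^ (d + 1))⁻¹)
    {s : ℝ≥0∞} (hs : 1 ≤ s) :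
    Tendsto (fun k => eLpNorm (f k) s volume) atTop (𝓝 0) := by
  have hw := memLp_inv_one_add_norm_pow d hs
  set W : (Fin d → ℝ) → ℝ := fun y => ((1 + ‖y‖) ^ (d + 1))⁻¹ with hW
  have h0 : Tendsto (fun ε : ℝ => ENNReal.ofReal ε * eLpNorm W s volume) (𝓝[>] 0) (𝓝 0) := by
    have h1 := ENNReal.Tendsto.mul_const (b := eLpNorm W s volume)
      (ENNReal.tendsto_ofReal (tendsto_id (α := ℝ) (x := 𝓝 0))) (Or.inr hw.2.ne)
    simp only [id, ENNReal.ofReal_zero, zero_mul] at h1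
    exact h1.mono_left nhdsWithin_le_nhds
  rw [ENNReal.tendsto_nhds_zero]
  intro δ hδ
  obtain ⟨ε, hε, hεpos⟩ :=
    ((ENNReal.tendsto_nhds_zero.mp h0 δ hδ).and self_mem_nhdsWithin).exists
  filter_upwards [hf ε hεpos] with k hk
  refine le_trans ?_ hε
  have h2 := eLpNorm_le_mul_eLpNorm_of_ae_le_mul (g := W) (μ := volume) (p := s) (c := ε)
    (Eventually.of_forall fun x => (hk x).trans ?_)
  · exact h2
  · gcongr
    exact le_abs_self _

/-- A sequence of packets bounded in `L^r` with a nonzero distributional limit has a subsequence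
converging to an element of `𝒢_ν` in every `L^s`. -/
theorem exists_subseq_tendsto_eLpNorm {d : ℕ} {ν : Fin d → ℕ} {r : ℝ≥0∞} (hr : 1 ≤ r)
    (hr_top : r ≠ ∞) {g : ℕ → (Fin d → ℝ) → ℂ} (hgk : ∀ k, g k ∈ GaussianPolyPacket d ν)
    {C : ℝ≥0∞} (hC : C < ∞) (hbound : ∀ k, eLpNorm (g k) r volume ≤ C)
    {g' : (Fin d → ℝ) → ℂ} (hloc : LocallyIntegrable g' volume) (hg' : ¬ g' =ᵐ[volume] 0)
    (hdistrib : ∀ φ : (Fin d → ℝ) → ℂ, ContDiff ℝ (⊤ : ℕ∞) φ → HasCompactSupport φ →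
      Tendsto (fun k => ∫ x, g k x * φ x) atTop (𝓝 (∫ x, g' x * φ x))) :
    ∃ φ : ℕ → ℕ, StrictMono φ ∧ ∃ h ∈ GaussianPolyPacket d ν, g' =ᵐ[volume] h ∧
      ∀ s : ℝ≥0∞, 1 ≤ s →
        Tendsto (fun k => eLpNorm (fun x => g (φ k) x - g' x) s volume) atTop (𝓝 0) := by
  choose w S M q β ℓ hw hbox hSM hMS hsymm hg using fun k => exists_normalForm (hgk k)
  choose c hwc using fun k => exists_polyEval_eq (hw k)
  obtain rfl : w = fun k => polyEval d (∑ i, ν i) (c k) := funext hwc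
  have hgp : g = fun k => packet d (∑ i, ν i) (c k) (S k) (q k) (β k) (ℓ k) :=
    funext fun k => funext (hg k)
  subst hgp
  obtain ⟨R, hR⟩ := exists_norm_scaled_coeff_le d (∑ i, ν i) hr hr_top hC
  have hcR := fun k => hR (c k) (S k) (M k) (q k) (β k) (ℓ k) (hSM k) (hbound k)
  obtain ⟨φ₁, M₀, q₀, hφ₁, hM, hq⟩ :=
    exists_subseq_affine_tendsto hSM β ℓ hr hr_top hcR hloc hg' hdistrib
  have hdet := det_ne_zero_of_tendsto (fun k => hSM (φ₁ k)) (fun k => β (φ₁ k))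
    (fun k => ℓ (φ₁ k)) hr hr_top (fun k => hcR (φ₁ k)) hloc hg'
    (fun ψ hψ hψc => (hdistrib ψ hψ hψc).comp hφ₁.tendsto_atTop) hM hq
  obtain ⟨S₀, hMS₀, hS⟩ :=
    tendsto_of_mul_eq_one (fun k => hSM (φ₁ k)) (fun k => hMS (φ₁ k)) hM hdet
  obtain ⟨φ₂, c₀, hφ₂, hc⟩ := exists_subseq_coeff_tendsto hM hdet (fun k => hcR (φ₁ k))
  obtain ⟨φ₃, β₀, ℓ₀, hφ₃, hβ, hℓ⟩ := exists_subseq_phase_tendsto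
    (fun k => hsymm (φ₁ (φ₂ k))) (fun k => ℓ (φ₁ (φ₂ k))) hc (hS.comp hφ₂.tendsto_atTop)
    (hq.comp hφ₂.tendsto_atTop) hloc hg'
    (fun ψ hψ hψc => (hdistrib ψ hψ hψc).comp (hφ₁.comp hφ₂).tendsto_atTop)
  set φ : ℕ → ℕ := fun k => φ₁ (φ₂ (φ₃ k)) with hφdef
  have hφ : StrictMono φ := hφ₁.comp (hφ₂.comp hφ₃)
  have hφ₂₃ : Tendsto (fun k => φ₂ (φ₃ k)) atTop atTop := (hφ₂.comp hφ₃).tendsto_atTop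
  replace hM : Tendsto (fun k => M (φ k)) atTop (𝓝 M₀) := hM.comp hφ₂₃
  replace hq : Tendsto (fun k => q (φ k)) atTop (𝓝 q₀) := hq.comp hφ₂₃
  replace hS : Tendsto (fun k => S (φ k)) atTop (𝓝 S₀) := hS.comp hφ₂₃
  replace hc : Tendsto (fun k => c (φ k)) atTop (𝓝 c₀) := hc.comp hφ₃.tendsto_atTop
  set F := packet d (∑ i, ν i) c₀ S₀ q₀ β₀ ℓ₀ with hF
  have hFcont : Continuous F := continuous_packet _ _ _ _ _
  have hunif : ∀ ε : ℝ, 0 < ε → ∀ᶠ k in atTop, ∀ x,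
      ‖packet d (∑ i, ν i) (c (φ k)) (S (φ k)) (q (φ k)) (β (φ k)) (ℓ (φ k)) x - F x‖ ≤
        ε * ((1 + ‖x‖) ^ (d + 1))⁻¹ := fun ε hε =>
    eventually_norm_packet_sub_le (fun k => hMS (φ k)) hMS₀ hM hc hS hq hβ hℓ (d + 1) hε
  have hLs := fun (s : ℝ≥0∞) (hs : 1 ≤ s) => tendsto_eLpNorm_of_eventually_norm_le hunif hs
  have hgF : g' =ᵐ[volume] F := by
    have hzero : (fun x => g' x - F x) =ᵐ[volume] 0 := by
      refine ae_eq_zero_of_integral_mul_eq_zero (hloc.sub hFcont.locallyIntegrable)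
        fun ψ hψ hψc => ?_
      have hInt : ∀ f : (Fin d → ℝ) → ℂ, LocallyIntegrable f volume →
          Integrable fun x => f x * ψ x := fun f hf => by
        simpa [mul_comm] using hf.integrable_smul_left_of_hasCompactSupport hψ.continuous hψc
      have h1 : Tendsto (fun k => ∫ x,
          packet d (∑ i, ν i) (c (φ k)) (S (φ k)) (q (φ k)) (β (φ k)) (ℓ (φ k)) x * ψ x)
          atTop (𝓝 (∫ x, F x * ψ x)) := by
        have hψint := hψ.continuous.integrable_of_hasCompactSupport hψc (μ := volume)
        refine tendsto_integral_filter_of_dominated_convergence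
          (fun x => ‖F x * ψ x‖ + ‖ψ x‖) (Eventually.of_forall fun k =>
            ((continuous_packet _ _ _ _ _).mul hψ.continuous).aestronglyMeasurable) ?_
          ((hInt F hFcont.locallyIntegrable).norm.add hψint.norm)
          (Eventually.of_forall fun x =>
            (tendsto_packet hc hS hq hβ hℓ tendsto_const_nhds).mul_const _)
        filter_upwards [hunif 1 one_pos] with k hk
        refine Eventually.of_forall fun x => ?_
        have h2 : ((1 + ‖x‖) ^ (d + 1))⁻¹ ≤ 1 :=
          inv_le_one_of_one_le₀ (one_le_pow₀ (by linarith [norm_nonneg x]))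
        have h3 := norm_le_norm_add_norm_sub'
          (packet d (∑ i, ν i) (c (φ k)) (S (φ k)) (q (φ k)) (β (φ k)) (ℓ (φ k)) x) (F x)
        rw [norm_mul, norm_mul]
        nlinarith [hk x, norm_nonneg (ψ x)]
      have h4 := tendsto_nhds_unique ((hdistrib ψ hψ hψc).comp hφ.tendsto_atTop) h1
      simp only [sub_mul]
      rw [integral_sub (hInt g' hloc) (hInt F hFcont.locallyIntegrable), h4, sub_self]
    filter_upwards [hzero] with x hx
    exact sub_eq_zero.mp hx
  refine ⟨φ, hφ, F, ?_, hgF, fun s hs => (hLs s hs).congr fun k => ?_⟩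
  · have hP : (fun x => polyEval d (∑ i, ν i) c₀ (S₀ (x - q₀))) ∈ boxPolyFunctions ν := by
      refine (Submodule.closed_of_finiteDimensional (boxPolyFunctions ν)).mem_of_tendsto
        (b := atTop) (tendsto_pi_nhds.mpr fun x => ?_) (Eventually.of_forall fun k => hbox (φ k))
      exact tendsto_polyEval hc (tendsto_clm_apply hS (tendsto_const_nhds.sub hq))
    refine normalForm_mem_gaussianPolyPacket hP hMS₀ q₀ (fun x y => ?_) ℓ₀
    have hβx := fun x y : Fin d → ℝ => tendsto_clm_apply
      (tendsto_clm_apply hβ (tendsto_const_nhds (x := x))) (tendsto_const_nhds (x := y))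
    exact tendsto_nhds_unique (hβx x y) ((hβx y x).congr fun k => hsymm (φ k) y x)
  · refine eLpNorm_congr_ae ?_
    filter_upwards [hgF] with x hx
    rw [hx]

/-- Let `(g_k)` be a sequence in `𝒢_ν` which is bounded in `L^r`
(`1 ≤ r < ∞`) and converges in the sense of distributions to some locally integrable `g`.
Then either `g = 0` a.e., or `g` is a.e. equal to a nonzero element of `𝒢_ν` and moreover
`‖g_k − g‖_{L^s} → 0` for every `1 ≤ s ≤ ∞`. -/
theorem gaussianPolyPacket_dichotomy
    (d : ℕ) (hd : 1 ≤ d) (ν : Fin d → ℕ) (r : ℝ≥0∞) (hr : 1 ≤ r) (hr_top : r ≠ ∞)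
    (g : ℕ → (Fin d → ℝ) → ℂ) (hgk : ∀ k, g k ∈ GaussianPolyPacket d ν)
    (hbound : ∃ C : ℝ≥0∞, C < ∞ ∧ ∀ k,
      eLpNorm (g k) r (volume : Measure (Fin d → ℝ)) ≤ C)
    (g' : (Fin d → ℝ) → ℂ)
    (hloc : LocallyIntegrable g' (volume : Measure (Fin d → ℝ)))
    (hdistrib : ∀ φ : (Fin d → ℝ) → ℂ, ContDiff ℝ (⊤ : ℕ∞) φ → HasCompactSupport φ →
      Tendsto (fun k => ∫ x : Fin d → ℝ, g k x * φ x) atTop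
        (nhds (∫ x : Fin d → ℝ, g' x * φ x))) :
    (g' =ᵐ[(volume : Measure (Fin d → ℝ))] (0 : (Fin d → ℝ) → ℂ)) ∨
    (∃ h ∈ GaussianPolyPacket d ν, h ≠ 0 ∧
      g' =ᵐ[(volume : Measure (Fin d → ℝ))] h ∧
      ∀ s : ℝ≥0∞, 1 ≤ s →
        Tendsto (fun k => eLpNorm (fun x => g k x - g' x) s (volume : Measure (Fin d → ℝ)))
          atTop (nhds 0)) := by
  obtain ⟨C, hC, hbound⟩ := hbound
  by_cases hg' : g' =ᵐ[(volume : Measure (Fin d → ℝ))] (0 : (Fin d → ℝ) → ℂ)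
  · exact Or.inl hg'
  refine Or.inr ?_
  obtain ⟨-, -, h, hmem, hgh, -⟩ :=
    exists_subseq_tendsto_eLpNorm hr hr_top hgk hC hbound hloc hg' hdistrib
  refine ⟨h, hmem, fun h0 => hg' (h0 ▸ hgh), hgh, fun s hs => ?_⟩
  refine tendsto_of_subseq_tendsto fun n hn => ?_
  obtain ⟨φ, -, -, -, -, hlim⟩ := exists_subseq_tendsto_eLpNorm hr hr_top (fun k => hgk (n k)) hC
    (fun k => hbound (n k)) hloc hg' fun ψ hψ hψc => (hdistrib ψ hψ hψc).comp hn
  exact ⟨φ, hlim s hs⟩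
end
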